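/- arXiv:1810.07295 — 2 statements merged into one kernel-verified Lean document; each statement's English description precedes it below -/
import Mathlib

section
/- Let a, b, m, n be positive integers with a·m − b·n ∈ {−1, 1}. Let ρ > 0, let g be holomorphic on the disc D(0,ρ) ⊆ ℂ, let f be holomorphic on D(0,ρ) \ {0}, and suppose there is r > 0 with r^(n+m) < ρ and a holomorphic function F on the polydisc P = {(x,y) ∈ ℂ² : |x| < r, |y| < r} such that F(x,y) = x^a·y^b·f(x^n·y^m) whenever x·y ≠ 0, F(0,0) = 0 and the Fréchet derivative of F at (0,0) is zero. Define on P the vector fields X(x,y) = x^a·y^b·(m·x, −n·y) and Y(x,y) = g(x^n·y^m)·( x·(−b·m + F(x,y)), y·(a·m − (n/m)·F(x,y)) ). If either (1) g(0) ≠ 0, or (2) g(0) = 0, g''(0) = 0, f₀ = 0 and g'(0) ≠ 0, then there exists ε ∈ (0, r) such that X and Y generate a maximal local ℂ²-action on the polydisc B_ε = {(x,y) : |x| < ε, |y| < ε}. -/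
open Set Filter Metric Complex Real

/-- A maximal local `ℂ²`-action generated by the commuting holomorphic vector fields
`X`, `Y` on the open set `Ω`: a pair `(W, Φ)` with `W ⊆ ℂ² × Ω` open and connected
containing `{0} × Ω`, `Φ : W → Ω` holomorphic, `Φ(0,p) = p`,
`Φ(v+v',p) = Φ(v,Φ(v',p))` whenever both sides are defined, `∂Φ/∂T = X∘Φ`,
`∂Φ/∂S = Y∘Φ`, and such that along any sequence in `W_p` converging to a frontier point
of `W_p` the points `Φ(vᵢ,p)` eventually leave every compact subset of `Ω`. -/
def IsMaxLocalC2Action {E : Type*} [NormedAddCommGroup E] [NormedSpace ℂ E]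
    (Ω : Set E) (X Y : E → E) (W : Set ((ℂ × ℂ) × E)) (Φ : (ℂ × ℂ) × E → E) : Prop :=
  IsOpen W ∧ IsPreconnected W ∧
  (∀ p ∈ Ω, (((0 : ℂ), (0 : ℂ)), p) ∈ W) ∧
  (∀ w ∈ W, w.2 ∈ Ω) ∧
  (∀ w ∈ W, Φ w ∈ Ω) ∧
  DifferentiableOn ℂ Φ W ∧
  (∀ p ∈ Ω, Φ (((0 : ℂ), (0 : ℂ)), p) = p) ∧
  (∀ (v v' : ℂ × ℂ) (p : E), (v + v', p) ∈ W → (v', p) ∈ W → (v, Φ (v', p)) ∈ W →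
    Φ (v + v', p) = Φ (v, Φ (v', p))) ∧
  (∀ w ∈ W, HasDerivAt (fun T : ℂ => Φ ((T, w.1.2), w.2)) (X (Φ w)) w.1.1) ∧
  (∀ w ∈ W, HasDerivAt (fun S : ℂ => Φ ((w.1.1, S), w.2)) (Y (Φ w)) w.1.2) ∧
  (∀ p ∈ Ω, ∀ K ⊆ Ω, IsCompact K → ∀ v : ℕ → ℂ × ℂ, (∀ i, (v i, p) ∈ W) →
    ∀ vl ∈ frontier {u : ℂ × ℂ | (u, p) ∈ W}, Tendsto v atTop (nhds vl) →
    ∀ᶠ i in atTop, Φ (v i, p) ∉ K)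

theorem aux_contDiffOn_one {E : Type*} [NormedAddCommGroup E] [NormedSpace ℂ E] [ProperSpace E]
    {U : Set E} (hU : IsOpen U) {F : E → ℂ} (hF : DifferentiableOn ℂ F U) :
    ContDiffOn ℂ 1 F U := by
  have key : ContinuousOn (fderiv ℂ F) U := by
    intro q₀ hq₀
    apply ContinuousAt.continuousWithinAt
    obtain ⟨R, hR, hball⟩ := Metric.isOpen_iff.1 hU q₀ hq₀
    have hsub : closedBall q₀ (R / 2) ⊆ U :=
      (closedBall_subset_ball (by linarith)).trans hball
    have huc : UniformContinuousOn F (closedBall q₀ (R / 2)) :=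
      (isCompact_closedBall q₀ (R / 2)).uniformContinuousOn_of_continuous
        (hF.continuousOn.mono hsub)
    rw [Metric.uniformContinuousOn_iff] at huc
    rw [Metric.continuousAt_iff]
    intro e he
    have hR4 : 0 < R / 4 := by linarith
    obtain ⟨d, hd, hdd⟩ := huc (e / 2 * (R / 4)) (by positivity)
    refine ⟨min d (R / 4), lt_min hd hR4, ?_⟩
    intro q hq
    have hq1 : dist q q₀ < d := lt_of_lt_of_le hq (min_le_left _ _)
    have hq2 : dist q q₀ < R / 4 := lt_of_lt_of_le hq (min_le_right _ _)
    have hqU : q ∈ U := hball (by simp; linarith)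
    rw [dist_eq_norm]
    refine lt_of_le_of_lt (ContinuousLinearMap.opNorm_le_of_unit_norm (C := e / 2)
      (by positivity) ?_) (by linarith)
    intro v hv
    -- the one-variable function
    have hin : ∀ w : E, dist w q₀ < R / 4 → ∀ z : ℂ, ‖z‖ ≤ R / 4 →
        w + z • v ∈ closedBall q₀ (R / 2) := by
      intro w hw z hz
      rw [mem_closedBall, dist_eq_norm]
      rw [dist_eq_norm] at hw
      calc ‖w + z • v - q₀‖ = ‖(w - q₀) + z • v‖ := by congr 1; abel
        _ ≤ ‖w - q₀‖ + ‖z • v‖ := norm_add_le _ _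
        _ ≤ R / 4 + R / 4 := by
          rw [norm_smul, hv, mul_one]; linarith
        _ = R / 2 := by ring
    have hder : ∀ w : E, dist w q₀ < R / 4 → ∀ z : ℂ, ‖z‖ ≤ R / 4 →
        HasDerivAt (fun z : ℂ => F (w + z • v)) (fderiv ℂ F (w + z • v) v) z := by
      intro w hw z hz
      have h1 : HasFDerivAt F (fderiv ℂ F (w + z • v)) (w + z • v) :=
        (hF.differentiableAt (hU.mem_nhds (hsub (hin w hw z hz)))).hasFDerivAt
      have h2 : HasDerivAt (fun z : ℂ => w + z • v) v z := by
        simpa using ((hasDerivAt_id z).smul_const v).const_add w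
      exact h1.comp_hasDerivAt z h2
    have hq₀4 : dist q₀ q₀ < R / 4 := by simpa using hR4
    have h0 : deriv (fun z : ℂ => F (q + z • v) - F (q₀ + z • v)) 0
        = (fderiv ℂ F q - fderiv ℂ F q₀) v := by
      have h1 : deriv (fun z : ℂ => F (q + z • v) - F (q₀ + z • v)) 0 = _ :=
        ((hder q hq2 0 (by simpa using hR4.le)).sub
        (hder q₀ hq₀4 0 (by simpa using hR4.le))).deriv
      simpa using h1
    rw [← h0]
    have hle := Complex.norm_deriv_le_of_forall_mem_sphere_norm_le (c := 0) (R := R / 4)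
      (C := e / 2 * (R / 4)) (f := fun z : ℂ => F (q + z • v) - F (q₀ + z • v)) hR4 ?_ ?_
    · refine hle.trans (le_of_eq ?_)
      field_simp
    · apply DifferentiableOn.diffContOnCl
      intro z hz
      rw [closure_ball _ hR4.ne'] at hz
      have hz' : ‖z‖ ≤ R / 4 := by simpa using hz
      exact ((hder q hq2 z hz').sub (hder q₀ hq₀4 z hz')).differentiableAt.differentiableWithinAt
    · intro z hz
      have hz' : ‖z‖ ≤ R / 4 := by
        have : ‖z‖ = R / 4 := by simpa using hz
        exact this.le
      have := hdd (q + z • v) (hin q hq2 z hz') (q₀ + z • v) (hin q₀ hq₀4 z hz')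
        (by simpa using hq1)
      rw [dist_eq_norm] at this
      exact this.le
  intro q hq
  have : ContDiffAt ℂ 1 F q := by
    rw [contDiffAt_one_iff]
    exact ⟨fderiv ℂ F, U, hU.mem_nhds hq, key,
      fun x hx => (hF.differentiableAt (hU.mem_nhds hx)).hasFDerivAt⟩
  exact this.contDiffWithinAt

theorem aux_action {E : Type*} [NormedAddCommGroup E] [NormedSpace ℂ E]
    (D : Set ((ℂ × ℂ) × E)) (A : (ℂ × ℂ) × E → E) (X' Y' X Y : E → E)
    (hDo : IsOpen D) (hD0 : ∀ p, (((0 : ℂ), (0 : ℂ)), p) ∈ D)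
    (hA0 : ∀ p, A (((0 : ℂ), (0 : ℂ)), p) = p)
    (hAd : ∀ w ∈ D, DifferentiableAt ℂ A w)
    (hAg : ∀ (v v' : ℂ × ℂ) (p : E), (v + v', p) ∈ D → (v', p) ∈ D →
      A (v + v', p) = A (v, A (v', p)))
    (hAX : ∀ w ∈ D, HasDerivAt (fun T : ℂ => A ((T, w.1.2), w.2)) (X' (A w)) w.1.1)
    (hAY : ∀ w ∈ D, HasDerivAt (fun S : ℂ => A ((w.1.1, S), w.2)) (Y' (A w)) w.1.2)
    (hAcl : ∀ (p q : E) (v : ℕ → ℂ × ℂ) (vl : ℂ × ℂ), (∀ i, (v i, p) ∈ D) →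
      Tendsto v atTop (nhds vl) → Tendsto (fun i => A (v i, p)) atTop (nhds q) →
      (vl, p) ∈ D)
    (ψ : OpenPartialHomeomorph E E) (Ω : Set E) (hΩo : IsOpen Ω) (hΩc : IsPreconnected Ω)
    (hΩn : Ω.Nonempty) (hΩ : Ω ⊆ ψ.source)
    (hψd : ∀ q ∈ Ω, DifferentiableAt ℂ ψ q)
    (hψs : ∀ q ∈ Ω, DifferentiableAt ℂ ψ.symm (ψ q))
    (hψX : ∀ q ∈ Ω, fderiv ℂ ψ q (X q) = X' (ψ q))
    (hψY : ∀ q ∈ Ω, fderiv ℂ ψ q (Y q) = Y' (ψ q)) :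
    ∃ (W : Set ((ℂ × ℂ) × E)) (Φ : (ℂ × ℂ) × E → E), IsMaxLocalC2Action Ω X Y W Φ := by
  obtain ⟨p₀, hp₀⟩ := hΩn
  set Ω' : Set E := ψ '' Ω with hΩ'
  have hΩ'o : IsOpen Ω' := ψ.isOpen_image_of_subset_source hΩo hΩ
  set W' : Set ((ℂ × ℂ) × E) := {w | w.2 ∈ Ω ∧ (w.1, ψ w.2) ∈ D ∧ A (w.1, ψ w.2) ∈ Ω'} with hW'
  set Φ : (ℂ × ℂ) × E → E := fun w => ψ.symm (A (w.1, ψ w.2)) with hΦ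
  have hψΦ : ∀ w ∈ W', ψ (Φ w) = A (w.1, ψ w.2) ∧ Φ w ∈ Ω := by
    rintro w ⟨h1, h2, q, hq, hq'⟩
    have : Φ w = q := by
      simp only [hΦ, ← hq', ψ.left_inv (hΩ hq)]
    rw [this]
    exact ⟨hq', hq⟩
  have hΩmem : ∀ q ∈ Ω, ψ q ∈ Ω' := fun q hq => mem_image_of_mem _ hq
  have hdiffB : ∀ w ∈ W', DifferentiableAt ℂ (fun w : (ℂ × ℂ) × E => A (w.1, ψ w.2)) w := by
    intro w hw
    have h1 : DifferentiableAt ℂ (fun w : (ℂ × ℂ) × E => (w.1, ψ w.2)) w :=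
      differentiableAt_fst.prodMk ((hψd _ hw.1).comp w differentiableAt_snd)
    exact (hAd _ hw.2.1).comp w h1
  have hdiffΦ : ∀ w ∈ W', DifferentiableAt ℂ Φ w := by
    intro w hw
    have h1 : DifferentiableAt ℂ ψ.symm (A (w.1, ψ w.2)) := by
      rw [← (hψΦ w hw).1]; exact hψs _ (hψΦ w hw).2
    exact h1.comp w (hdiffB w hw)
  have hW'o : IsOpen W' := by
    rw [isOpen_iff_mem_nhds]
    intro w hw
    have h1 : ∀ᶠ x in nhds w, x.2 ∈ Ω := continuousAt_snd.eventually (hΩo.mem_nhds hw.1)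
    have hc : ContinuousAt (fun w : (ℂ × ℂ) × E => (w.1, ψ w.2)) w :=
      continuousAt_fst.prodMk ((hψd _ hw.1).continuousAt.comp continuousAt_snd)
    have h2 := hc.eventually (hDo.mem_nhds hw.2.1)
    have h3 := (hdiffB w hw).continuousAt.eventually (hΩ'o.mem_nhds hw.2.2)
    filter_upwards [h1, h2, h3] with x a b c using ⟨a, b, c⟩
  have h0W' : ∀ p ∈ Ω, (((0 : ℂ), (0 : ℂ)), p) ∈ W' := fun p hp =>
    ⟨hp, hD0 _, by simpa [hA0] using hΩmem p hp⟩
  have hinv : ∀ q ∈ Ω, ∀ x : E, fderiv ℂ ψ.symm (ψ q) (fderiv ℂ ψ q x) = x := by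
    intro q hq x
    have h1 : HasFDerivAt (fun y => ψ.symm (ψ y)) ((fderiv ℂ ψ.symm (ψ q)).comp (fderiv ℂ ψ q)) q :=
      (hψs q hq).hasFDerivAt.comp q (hψd q hq).hasFDerivAt
    have h2 : HasFDerivAt (fun y => ψ.symm (ψ y)) (ContinuousLinearMap.id ℂ E) q := by
      refine (hasFDerivAt_id q).congr_of_eventuallyEq ?_
      filter_upwards [hΩo.mem_nhds hq] with y hy using by simp [ψ.left_inv (hΩ hy)]
    have := h1.unique h2
    exact congrArg (fun L => L x) this
  set w₀ : (ℂ × ℂ) × E := ((0, 0), p₀) with hw₀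
  set W := connectedComponentIn W' w₀ with hW
  have hWW' : W ⊆ W' := connectedComponentIn_subset _ _
  have hWo : IsOpen W := by
    rw [isOpen_iff_mem_nhds]
    intro w hw
    obtain ⟨e, he, hball⟩ := Metric.isOpen_iff.1 hW'o w (hWW' hw)
    rw [hW, connectedComponentIn_eq hw]
    refine mem_of_superset (Metric.ball_mem_nhds w he) ?_
    let _ : NormedSpace ℝ E := NormedSpace.restrictScalars ℝ ℂ E
    exact ((convex_ball w e).isPreconnected).subset_connectedComponentIn (mem_ball_self he) hball
  have h0W : ∀ p ∈ Ω, (((0 : ℂ), (0 : ℂ)), p) ∈ W := by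
    intro p hp
    have h1 : IsPreconnected ((fun p : E => (((0 : ℂ), (0 : ℂ)), p)) '' Ω) :=
      hΩc.image _ (by fun_prop)
    refine h1.subset_connectedComponentIn (x := w₀) ⟨p₀, hp₀, rfl⟩ ?_ ⟨p, hp, rfl⟩
    rintro _ ⟨q, hq, rfl⟩
    exact h0W' q hq
  have hWcl : ∀ w ∈ W', w ∈ closure W → w ∈ W := by
    intro w hw hcl
    have h1 : IsPreconnected (insert w W) :=
      isPreconnected_connectedComponentIn.subset_closure (subset_insert _ _)
        (insert_subset hcl subset_closure)
    exact h1.subset_connectedComponentIn (mem_insert_of_mem _ (h0W p₀ hp₀))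
      (insert_subset hw hWW') (mem_insert _ _)
  refine ⟨W, Φ, hWo, isPreconnected_connectedComponentIn, h0W, fun w hw => (hWW' hw).1,
    fun w hw => (hψΦ w (hWW' hw)).2, fun w hw => (hdiffΦ w (hWW' hw)).differentiableWithinAt,
    ?_, ?_, ?_, ?_, ?_⟩
  · intro p hp
    simp only [hΦ, hA0]
    exact ψ.left_inv (hΩ hp)
  · intro v v' p h1 h2 h3
    have e1 := (hψΦ _ (hWW' h2)).1
    simp only [hΦ] at e1 ⊢
    rw [e1, hAg v v' (ψ p) (hWW' h1).2.1 (hWW' h2).2.1]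
  · intro w hw
    have hw' := hWW' hw
    have e1 := hψΦ w hw'
    have h1 : HasFDerivAt ψ.symm (fderiv ℂ ψ.symm (ψ (Φ w))) (A ((w.1.1, w.1.2), ψ w.2)) := by
      have := (hψs _ e1.2).hasFDerivAt
      rwa [e1.1] at this ⊢
    have h2 := h1.comp_hasDerivAt w.1.1 (hAX (w.1, ψ w.2) hw'.2.1)
    have h3 : fderiv ℂ ψ.symm (ψ (Φ w)) (X' (A (w.1, ψ w.2))) = X (Φ w) := by
      rw [← e1.1, ← hψX _ e1.2, hinv _ e1.2]
    rw [h3] at h2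
    exact h2
  · intro w hw
    have hw' := hWW' hw
    have e1 := hψΦ w hw'
    have h1 : HasFDerivAt ψ.symm (fderiv ℂ ψ.symm (ψ (Φ w))) (A ((w.1.1, w.1.2), ψ w.2)) := by
      have := (hψs _ e1.2).hasFDerivAt
      rwa [e1.1] at this ⊢
    have h2 := h1.comp_hasDerivAt w.1.2 (hAY (w.1, ψ w.2) hw'.2.1)
    have h3 : fderiv ℂ ψ.symm (ψ (Φ w)) (Y' (A (w.1, ψ w.2))) = Y (Φ w) := by
      rw [← e1.1, ← hψY _ e1.2, hinv _ e1.2]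
    rw [h3] at h2
    exact h2
  · intro p hp K hK hKc v hv vl hvl hlim
    by_contra hcon
    rw [Filter.not_eventually] at hcon
    simp only [not_not] at hcon
    obtain ⟨q, hqK, s, hs, hsq⟩ := hKc.tendsto_subseq' hcon
    have hqΩ := hK hqK
    have hlim' : Tendsto (v ∘ s) atTop (nhds vl) := hlim.comp hs.tendsto_atTop
    have hAlim : Tendsto (fun i => A ((v ∘ s) i, ψ p)) atTop (nhds (ψ q)) := by
      have h1 := (hψd q hqΩ).continuousAt.tendsto.comp hsq
      refine h1.congr fun i => ?_
      exact (hψΦ _ (hWW' (hv (s i)))).1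
    have hDl : (vl, ψ p) ∈ D := hAcl (ψ p) (ψ q) (v ∘ s) vl
      (fun i => (hWW' (hv (s i))).2.1) hlim' hAlim
    have hAl : A (vl, ψ p) = ψ q := by
      have h1 : Tendsto (fun i => A ((v ∘ s) i, ψ p)) atTop (nhds (A (vl, ψ p))) :=
        (hAd _ hDl).continuousAt.tendsto.comp (hlim'.prodMk_nhds tendsto_const_nhds)
      exact tendsto_nhds_unique h1 hAlim
    have hvW' : (vl, p) ∈ W' := ⟨hp, hDl, by rw [hAl]; exact hΩmem q hqΩ⟩
    have hvW : (vl, p) ∈ W := by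
      apply hWcl _ hvW'
      exact mem_closure_of_tendsto (hlim.prodMk_nhds tendsto_const_nhds)
        (Eventually.of_forall hv)
    have hfo : IsOpen {u : ℂ × ℂ | (u, p) ∈ W} := hWo.preimage (by fun_prop)
    rw [hfo.frontier_eq] at hvl
    exact hvl.2 hvW

/-- Monomial twist of a point by two units. -/
noncomputable def auxTw (p1 p2 e1 e2 : ℤ) (Q d : ℂ) (q : ℂ × ℂ) : ℂ × ℂ :=
  (q.1 * Q ^ p1 * d ^ e1, q.2 * Q ^ p2 * d ^ e2)

theorem auxTw_mono (p1 p2 e1 e2 : ℤ) (i j : ℕ) (Q d : ℂ) (hQ : Q ≠ 0) (hd : d ≠ 0) (q : ℂ × ℂ) :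
    (auxTw p1 p2 e1 e2 Q d q).1 ^ i * (auxTw p1 p2 e1 e2 Q d q).2 ^ j =
      q.1 ^ i * q.2 ^ j * Q ^ (i * p1 + j * p2) * d ^ (i * e1 + j * e2) := by
  simp only [auxTw, mul_pow]
  rw [zpow_add₀ hQ, zpow_add₀ hd, mul_comm (i : ℤ) p1, mul_comm (j : ℤ) p2,
    mul_comm (i : ℤ) e1, mul_comm (j : ℤ) e2, zpow_mul, zpow_mul, zpow_mul, zpow_mul]
  simp only [zpow_natCast]
  ring

theorem auxTw_comp (p1 p2 e1 e2 : ℤ) (Q d Q' d' : ℂ) (q : ℂ × ℂ) :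
    auxTw p1 p2 e1 e2 Q d (auxTw p1 p2 e1 e2 Q' d' q) = auxTw p1 p2 e1 e2 (Q * Q') (d * d') q := by
  simp only [auxTw, mul_zpow]
  ext <;> simp <;> ring

theorem auxTw_hasDerivAt_comp (p e : ℤ) (x Q d : ℂ → ℂ) (x' Q' d' s : ℂ)
    (hx : HasDerivAt x x' s) (hQ : HasDerivAt Q Q' s) (hd : HasDerivAt d d' s)
    (hQ0 : Q s ≠ 0) (hd0 : d s ≠ 0) :
    HasDerivAt (fun s => x s * Q s ^ p * d s ^ e)
      (Q s ^ p * d s ^ e * (x' + x s * (p * Q' / Q s + e * d' / d s))) s := by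
  have h1 : HasDerivAt (fun s => Q s ^ p) ((p * Q s ^ (p - 1)) * Q') s :=
    (hasDerivAt_zpow p (Q s) (Or.inl hQ0)).comp s hQ
  have h2 : HasDerivAt (fun s => d s ^ e) ((e * d s ^ (e - 1)) * d') s :=
    (hasDerivAt_zpow e (d s) (Or.inl hd0)).comp s hd
  have h3 := (hx.mul h1).mul h2
  refine h3.congr_deriv ?_
  rw [zpow_sub_one₀ hQ0, zpow_sub_one₀ hd0]
  simp only [Pi.mul_apply]
  field_simp
  ring

theorem auxTw_hasDerivAt (p1 p2 e1 e2 : ℤ) (q : ℂ → ℂ × ℂ) (Q d : ℂ → ℂ) (q' : ℂ × ℂ) (Q' d' s : ℂ)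
    (hq : HasDerivAt q q' s) (hQ : HasDerivAt Q Q' s) (hd : HasDerivAt d d' s)
    (hQ0 : Q s ≠ 0) (hd0 : d s ≠ 0) :
    HasDerivAt (fun s => auxTw p1 p2 e1 e2 (Q s) (d s) (q s))
      (Q s ^ p1 * d s ^ e1 * (q'.1 + (q s).1 * (p1 * Q' / Q s + e1 * d' / d s)),
       Q s ^ p2 * d s ^ e2 * (q'.2 + (q s).2 * (p2 * Q' / Q s + e2 * d' / d s))) s := by
  have hx : HasDerivAt (fun s => (q s).1) q'.1 s :=
    (ContinuousLinearMap.fst ℂ ℂ ℂ).hasFDerivAt.comp_hasDerivAt s hq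
  have hy : HasDerivAt (fun s => (q s).2) q'.2 s :=
    (ContinuousLinearMap.snd ℂ ℂ ℂ).hasFDerivAt.comp_hasDerivAt s hq
  exact (auxTw_hasDerivAt_comp p1 e1 _ Q d _ Q' d' s hx hQ hd hQ0 hd0).prodMk
    (auxTw_hasDerivAt_comp p2 e2 _ Q d _ Q' d' s hy hQ hd hQ0 hd0)

theorem auxTw_contDiffAt {E : Type*} [NormedAddCommGroup E] [NormedSpace ℂ E]
    (p1 p2 e1 e2 : ℤ) (q : E → ℂ × ℂ) (Q d : E → ℂ) (w : E)
    (hq : ContDiffAt ℂ 1 q w) (hQ : ContDiffAt ℂ 1 Q w) (hd : ContDiffAt ℂ 1 d w)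
    (hQ0 : Q w ≠ 0) (hd0 : d w ≠ 0) :
    ContDiffAt ℂ 1 (fun s => auxTw p1 p2 e1 e2 (Q s) (d s) (q s)) w := by
  have hz : ∀ (k : ℤ) (z : ℂ), z ≠ 0 → ContDiffAt ℂ 1 (fun z : ℂ => z ^ k) z := by
    intro k z hz
    have h1 : DifferentiableOn ℂ (fun z : ℂ => z ^ k) {0}ᶜ := fun y hy =>
      (differentiableAt_zpow.2 (Or.inl hy)).differentiableWithinAt
    exact (h1.contDiffOn isOpen_compl_singleton).contDiffAt
      (isOpen_compl_singleton.mem_nhds hz)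
  have hQz : ∀ k : ℤ, ContDiffAt ℂ 1 (fun s => Q s ^ k) w := fun k =>
    (hz k _ hQ0).comp w hQ
  have hdz : ∀ k : ℤ, ContDiffAt ℂ 1 (fun s => d s ^ k) w := fun k =>
    (hz k _ hd0).comp w hd
  exact ((hq.fst.mul (hQz p1)).mul (hdz e1)).prodMk ((hq.snd.mul (hQz p2)).mul (hdz e2))

theorem aux_zcoef (a b m n : ℕ) (δ : ℤ) (hδ : δ * δ = 1) (hab : (a * m : ℤ) - b * n = δ) :
    (a * (-δ * m) + b * (δ * n) = -1) ∧ (a * (δ * b) + b * (-δ * a) = 0) ∧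
    (n * (-δ * m) + m * (δ * n) = 0) ∧ (n * (δ * b) + m * (-δ * a) = -1) := by
  refine ⟨?_, ?_, ?_, ?_⟩
  · linear_combination -δ * hab - hδ
  · ring
  · ring
  · linear_combination -δ * hab - hδ

theorem aux_tw_t (a b m n : ℕ) (δ : ℤ) (hδ : δ * δ = 1) (hab : (a * m : ℤ) - b * n = δ)
    (Q d : ℂ) (hQ : Q ≠ 0) (hd : d ≠ 0) (q : ℂ × ℂ) :
    (auxTw (-δ * m) (δ * n) (δ * b) (-δ * a) Q d q).1 ^ a *
      (auxTw (-δ * m) (δ * n) (δ * b) (-δ * a) Q d q).2 ^ b = q.1 ^ a * q.2 ^ b / Q := by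
  obtain ⟨h1, h2, h3, h4⟩ := aux_zcoef a b m n δ hδ hab
  rw [auxTw_mono _ _ _ _ _ _ _ _ hQ hd, h1, h2]
  simp [div_eq_mul_inv]

theorem aux_tw_u (a b m n : ℕ) (δ : ℤ) (hδ : δ * δ = 1) (hab : (a * m : ℤ) - b * n = δ)
    (Q d : ℂ) (hQ : Q ≠ 0) (hd : d ≠ 0) (q : ℂ × ℂ) :
    (auxTw (-δ * m) (δ * n) (δ * b) (-δ * a) Q d q).1 ^ n *
      (auxTw (-δ * m) (δ * n) (δ * b) (-δ * a) Q d q).2 ^ m = q.1 ^ n * q.2 ^ m / d := by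
  obtain ⟨h1, h2, h3, h4⟩ := aux_zcoef a b m n δ hδ hab
  rw [auxTw_mono _ _ _ _ _ _ _ _ hQ hd, h3, h4]
  simp [div_eq_mul_inv]

/-- Everything in normal form: abstract flow plus local coordinates give the action. -/
theorem aux_normal (a b m n : ℕ) (δ : ℤ) (hδ : δ * δ = 1) (hab : (a * m : ℤ) - b * n = δ)
    (X Y : ℂ × ℂ → ℂ × ℂ) (c : ℂ) (gh : ℂ → ℂ) (d : ℂ → ℂ → ℂ)
    (hd : Differentiable ℂ (fun z : ℂ × ℂ => d z.1 z.2))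
    (hd0 : ∀ u, d 0 u = 1) (hdnz : ∀ S, d S 0 ≠ 0)
    (hdc : ∀ S S' u, d S' u ≠ 0 → d (S + S') u = d S (u / d S' u) * d S' u)
    (hdS : ∀ S u, d S u ≠ 0 →
      HasDerivAt (fun S => d S u) (-(δ * m * gh (u / d S u)) * d S u) S)
    (ψ : OpenPartialHomeomorph (ℂ × ℂ) (ℂ × ℂ)) (Ω : Set (ℂ × ℂ)) (hΩo : IsOpen Ω)
    (hΩc : IsPreconnected Ω)
    (hΩn : Ω.Nonempty) (hΩ : Ω ⊆ ψ.source)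
    (hψd : ∀ q ∈ Ω, DifferentiableAt ℂ ψ q)
    (hψs : ∀ q ∈ Ω, DifferentiableAt ℂ ψ.symm (ψ q))
    (hψX : ∀ q ∈ Ω, fderiv ℂ ψ q (X q) =
      ((ψ q).1 * (((ψ q).1 ^ a * (ψ q).2 ^ b) * m), (ψ q).2 * (((ψ q).1 ^ a * (ψ q).2 ^ b) * (-n))))
    (hψY : ∀ q ∈ Ω, fderiv ℂ ψ q (Y q) =
      ((ψ q).1 * (gh ((ψ q).1 ^ n * (ψ q).2 ^ m) * (-(b * m)) +
          c * ((ψ q).1 ^ a * (ψ q).2 ^ b) * m),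
       (ψ q).2 * (gh ((ψ q).1 ^ n * (ψ q).2 ^ m) * (a * m) +
          c * ((ψ q).1 ^ a * (ψ q).2 ^ b) * (-n)))) :
    ∃ (W : Set ((ℂ × ℂ) × (ℂ × ℂ))) (Φ : (ℂ × ℂ) × (ℂ × ℂ) → ℂ × ℂ),
      IsMaxLocalC2Action Ω X Y W Φ := by
  have hδ' : (δ : ℂ) * δ = 1 := by exact_mod_cast hδ
  set Q : (ℂ × ℂ) × (ℂ × ℂ) → ℂ :=
    fun w => 1 - δ * (w.2.1 ^ a * w.2.2 ^ b) * (w.1.1 + c * w.1.2) with hQdef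
  set dd : (ℂ × ℂ) × (ℂ × ℂ) → ℂ := fun w => d w.1.2 (w.2.1 ^ n * w.2.2 ^ m) with hdddef
  set A : (ℂ × ℂ) × (ℂ × ℂ) → ℂ × ℂ :=
    fun w => auxTw (-δ * m) (δ * n) (δ * b) (-δ * a) (Q w) (dd w) w.2 with hAdef
  have hQd : Differentiable ℂ Q := by
    rw [hQdef]; fun_prop
  have hddd : Differentiable ℂ dd := by
    have : Differentiable ℂ (fun w : (ℂ × ℂ) × (ℂ × ℂ) => (w.1.2, w.2.1 ^ n * w.2.2 ^ m)) := by
      fun_prop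
    exact hd.comp this
  have hC1 : ∀ f : (ℂ × ℂ) × (ℂ × ℂ) → ℂ, Differentiable ℂ f → ∀ w, ContDiffAt ℂ 1 f w := by
    intro f hf w
    exact (aux_contDiffOn_one isOpen_univ hf.differentiableOn).contDiffAt univ_mem
  have ht : ∀ w, Q w ≠ 0 → dd w ≠ 0 →
      (A w).1 ^ a * (A w).2 ^ b = w.2.1 ^ a * w.2.2 ^ b / Q w := fun w h1 h2 =>
    aux_tw_t a b m n δ hδ hab _ _ h1 h2 _
  have hu : ∀ w, Q w ≠ 0 → dd w ≠ 0 →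
      (A w).1 ^ n * (A w).2 ^ m = w.2.1 ^ n * w.2.2 ^ m / dd w := fun w h1 h2 =>
    aux_tw_u a b m n δ hδ hab _ _ h1 h2 _
  refine aux_action {w | Q w ≠ 0 ∧ dd w ≠ 0} A
    (fun q => (q.1 * ((q.1 ^ a * q.2 ^ b) * m), q.2 * ((q.1 ^ a * q.2 ^ b) * (-n))))
    (fun q => (q.1 * (gh (q.1 ^ n * q.2 ^ m) * (-(b * m)) + c * (q.1 ^ a * q.2 ^ b) * m),
       q.2 * (gh (q.1 ^ n * q.2 ^ m) * (a * m) + c * (q.1 ^ a * q.2 ^ b) * (-n))))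
    X Y ?_ ?_ ?_ ?_ ?_ ?_ ?_ ?_ ψ Ω hΩo hΩc hΩn hΩ hψd hψs hψX hψY
  · exact (isOpen_ne_fun hQd.continuous continuous_const).inter
      (isOpen_ne_fun hddd.continuous continuous_const)
  · intro p
    simp [hQdef, hdddef, hd0]
  · intro p
    simp [hAdef, hQdef, hdddef, hd0, auxTw]
  · rintro w ⟨h1, h2⟩
    exact (auxTw_contDiffAt _ _ _ _ _ _ _ w contDiffAt_snd (hC1 _ hQd w) (hC1 _ hddd w)
      h1 h2).differentiableAt one_ne_zero
  · rintro v v' p - ⟨h1, h2⟩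
    have e1 : Q (v + v', p) = Q (v, A (v', p)) * Q (v', p) := by
      have := ht (v', p) h1 h2
      have hc := div_mul_cancel₀ (p.1 ^ a * p.2 ^ b) h1
      simp only [hQdef] at this hc ⊢
      rw [this]
      simp only [Prod.fst_add, Prod.snd_add]
      linear_combination δ * (v.1 + c * v.2) * hc
    have e2 : dd (v + v', p) = dd (v, A (v', p)) * dd (v', p) := by
      have := hu (v', p) h1 h2
      simp only [hdddef] at h2
      simp only [hdddef] at this ⊢
      rw [this]
      exact hdc _ _ _ h2
    change auxTw _ _ _ _ (Q (v + v', p)) (dd (v + v', p)) p = auxTw _ _ _ _ _ _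
      (auxTw _ _ _ _ _ _ p)
    rw [auxTw_comp, e1, e2]
  · rintro w ⟨h1, h2⟩
    have hq : HasDerivAt (fun _ : ℂ => w.2) 0 w.1.1 := hasDerivAt_const _ _
    have hQ' : HasDerivAt (fun T : ℂ => Q ((T, w.1.2), w.2))
        (-(δ * (w.2.1 ^ a * w.2.2 ^ b))) w.1.1 := by
      have := (((hasDerivAt_id w.1.1).add_const (c * w.1.2)).const_mul
        (δ * (w.2.1 ^ a * w.2.2 ^ b))).const_sub 1
      simpa [hQdef] using this
    have hdd' : HasDerivAt (fun T : ℂ => dd ((T, w.1.2), w.2)) 0 w.1.1 := by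
      simpa [hdddef] using hasDerivAt_const w.1.1 (d w.1.2 (w.2.1 ^ n * w.2.2 ^ m))
    have h3 := auxTw_hasDerivAt (-δ * m) (δ * n) (δ * b) (-δ * a) _ _ _ _ _ _ _ hq hQ' hdd' h1 h2
    refine h3.congr_deriv ?_
    rw [ht w h1 h2]
    simp only [hAdef, auxTw]
    ext
    · simp
      field_simp
      linear_combination (w.2.1 ^ a * w.2.2 ^ b * m * w.2.1) * hδ'
    · simp
      field_simp
      linear_combination  (-(w.2.1 ^ a * w.2.2 ^ b * n * w.2.2)) * hδ'
  · rintro w ⟨h1, h2⟩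
    have hq : HasDerivAt (fun _ : ℂ => w.2) 0 w.1.2 := hasDerivAt_const _ _
    have hQ' : HasDerivAt (fun S : ℂ => Q ((w.1.1, S), w.2))
        (-(δ * (w.2.1 ^ a * w.2.2 ^ b) * c)) w.1.2 := by
      have := ((((hasDerivAt_id w.1.2).const_mul c).const_add w.1.1).const_mul
        (δ * (w.2.1 ^ a * w.2.2 ^ b))).const_sub 1
      simpa [hQdef] using this
    have hdd' := hdS w.1.2 (w.2.1 ^ n * w.2.2 ^ m) h2
    have h3 := auxTw_hasDerivAt (-δ * m) (δ * n) (δ * b) (-δ * a) _ _ _ _ _ _ _ hq hQ' hdd' h1 h2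
    refine h3.congr_deriv ?_
    rw [ht w h1 h2, hu w h1 h2]
    change (_, _) = ((auxTw _ _ _ _ (Q w) (dd w) w.2).1 * _,
      (auxTw _ _ _ _ (Q w) (dd w) w.2).2 * _)
    have r1 : d w.1.2 (w.2.1 ^ n * w.2.2 ^ m) = dd w := rfl
    have r2 : Q ((w.1.1, w.1.2), w.2) = Q w := rfl
    simp only [auxTw]
    rw [r1, r2]
    generalize gh (w.2.1 ^ n * w.2.2 ^ m / dd w) = G
    generalize Q w = q at *
    generalize dd w = e at *
    ext
    · simp
      field_simp
      linear_combination ((w.2.1 ^ a * w.2.2 ^ b * c - q * b * G) * w.2.1 * m) * hδ'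
    · simp
      field_simp
      linear_combination  (-(w.2.1 ^ a * w.2.2 ^ b * n * c - a * m * q * G) * w.2.2) * hδ'
  · intro p q v vl hv hvl hAl
    have ct : Continuous (fun q : ℂ × ℂ => q.1 ^ a * q.2 ^ b) := by fun_prop
    have cu : Continuous (fun q : ℂ × ℂ => q.1 ^ n * q.2 ^ m) := by fun_prop
    have hvp : Tendsto (fun i => (v i, p)) atTop (nhds (vl, p)) :=
      hvl.prodMk_nhds tendsto_const_nhds
    have lQ := (hQd.continuous.tendsto (vl, p)).comp hvp
    have ld := (hddd.continuous.tendsto (vl, p)).comp hvp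
    have lt := (ct.tendsto q).comp hAl
    have lu := (cu.tendsto q).comp hAl
    have k1 := tendsto_nhds_unique (lt.mul lQ) (tendsto_const_nhds.congr (f₁ := fun _ =>
      p.1 ^ a * p.2 ^ b) (fun i => by
        have := ht (v i, p) (hv i).1 (hv i).2
        simp only [Function.comp]
        rw [this, div_mul_cancel₀ _ (hv i).1]))
    have k2 := tendsto_nhds_unique (lu.mul ld) (tendsto_const_nhds.congr (f₁ := fun _ =>
      p.1 ^ n * p.2 ^ m) (fun i => by
        have := hu (v i, p) (hv i).1 (hv i).2
        simp only [Function.comp]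
        rw [this, div_mul_cancel₀ _ (hv i).2]))
    constructor
    · intro h0
      rw [h0, mul_zero] at k1
      simp [hQdef, ← k1] at h0
    · intro h0
      rw [h0, mul_zero] at k2
      simp only [hdddef, ← k2] at h0
      exact hdnz _ h0

/-- The rotation used for averaging. -/
noncomputable def auxRot (α β : ℤ) (θ : ℝ) : ℂ × ℂ →L[ℂ] ℂ × ℂ :=
  Complex.exp (α * θ * I) • ((ContinuousLinearMap.inl ℂ ℂ ℂ).comp (ContinuousLinearMap.fst ℂ ℂ ℂ)) +
  Complex.exp (β * θ * I) • ((ContinuousLinearMap.inr ℂ ℂ ℂ).comp (ContinuousLinearMap.snd ℂ ℂ ℂ))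

theorem auxRot_apply (α β : ℤ) (θ : ℝ) (q : ℂ × ℂ) :
    auxRot α β θ q = (Complex.exp (α * θ * I) * q.1, Complex.exp (β * θ * I) * q.2) := by
  simp [auxRot]

theorem auxRot_continuous (α β : ℤ) : Continuous (auxRot α β) := by
  unfold auxRot; fun_prop

theorem auxRot_norm (α β : ℤ) (θ : ℝ) (q : ℂ × ℂ) : ‖auxRot α β θ q‖ = ‖q‖ := by
  have h : ∀ k : ℤ, ‖Complex.exp (k * θ * I)‖ = 1 := by
    intro k
    have := Complex.norm_exp_ofReal_mul_I (k * θ)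
    simpa using this
  rw [auxRot_apply, Prod.norm_def, Prod.norm_def, norm_mul, norm_mul, h, h, one_mul, one_mul]

theorem auxRot_add (α β : ℤ) (θ φ : ℝ) (q : ℂ × ℂ) :
    auxRot α β θ (auxRot α β φ q) = auxRot α β (θ + φ) q := by
  simp only [auxRot_apply]
  ext
  · simp only [← mul_assoc, ← Complex.exp_add]; congr 2; push_cast; ring
  · simp only [← mul_assoc, ← Complex.exp_add]; congr 2; push_cast; ring

theorem auxRot_zero (α β : ℤ) (q : ℂ × ℂ) : auxRot α β 0 q = q := by
  simp [auxRot_apply]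

theorem auxRot_per (α β : ℤ) (θ : ℝ) (q : ℂ × ℂ) :
    auxRot α β (θ + 2 * π) q = auxRot α β θ q := by
  have h : ∀ k : ℤ, Complex.exp (k * ((θ + 2 * π : ℝ) : ℂ) * I) = Complex.exp (k * θ * I) := by
    intro k
    have : (k * ((θ + 2 * π : ℝ) : ℂ) * I) = k * θ * I + k * (2 * π * I) := by push_cast; ring
    rw [this, Complex.exp_add, Complex.exp_int_mul_two_pi_mul_I, mul_one]
  rw [auxRot_apply, auxRot_apply, h, h]

theorem aux_rot_cont {r : ℝ} {F : ℂ × ℂ → ℂ} (hF : ContinuousOn F (ball 0 r))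
    (α β : ℤ) (q : ℂ × ℂ) (hq : q ∈ ball (0 : ℂ × ℂ) r) :
    Continuous (fun θ : ℝ => F (auxRot α β θ q)) := by
  have h1 : Continuous (fun θ : ℝ => auxRot α β θ q) := by
    have := auxRot_continuous α β
    fun_prop
  refine hF.comp_continuous h1 fun θ => ?_
  simpa [auxRot_norm] using hq

theorem aux_int_diff {r : ℝ} {F : ℂ × ℂ → ℂ} (hF : DifferentiableOn ℂ F (ball 0 r))
    (α β : ℤ) (w : ℝ → ℂ) (hw : Continuous w) :
    DifferentiableOn ℂ (fun q => ∫ θ in (0 : ℝ)..2 * π, w θ * F (auxRot α β θ q)) (ball 0 r) := by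
  intro q₀ hq₀
  apply DifferentiableAt.differentiableWithinAt
  have hq₀' : ‖q₀‖ < r := by simpa using hq₀
  obtain ⟨R, hR1, hR2⟩ := exists_between hq₀'
  have hC1 := aux_contDiffOn_one isOpen_ball hF
  have hfc : ContinuousOn (fderiv ℂ F) (ball 0 r) :=
    hC1.continuousOn_fderiv_of_isOpen isOpen_ball le_rfl
  obtain ⟨C, hC⟩ := (isCompact_closedBall (0 : ℂ × ℂ) R).exists_bound_of_continuousOn
    (hfc.mono (closedBall_subset_ball hR2))
  have hrot := auxRot_continuous α β
  have hmem : ∀ q ∈ ball (0 : ℂ × ℂ) R, ∀ θ, auxRot α β θ q ∈ ball (0 : ℂ × ℂ) R := by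
    intro q hq θ
    simpa [auxRot_norm] using hq
  have hsub : ball (0 : ℂ × ℂ) R ⊆ ball 0 r := ball_subset_ball hR2.le
  have hq₀R : q₀ ∈ ball (0 : ℂ × ℂ) R := by simpa using hR1
  have hcont : ∀ q ∈ ball (0 : ℂ × ℂ) R, Continuous (fun θ => w θ * F (auxRot α β θ q)) :=
    fun q hq => hw.mul (aux_rot_cont hF.continuousOn α β q (hsub hq))
  have hRn : ∀ θ, ‖auxRot α β θ‖ ≤ 1 := fun θ =>
    ContinuousLinearMap.opNorm_le_bound _ zero_le_one fun x => by rw [auxRot_norm, one_mul]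
  refine (intervalIntegral.hasFDerivAt_integral_of_dominated_of_fderiv_le
    (F := fun q θ => w θ * F (auxRot α β θ q))
    (F' := fun q θ => w θ • (fderiv ℂ F (auxRot α β θ q)).comp (auxRot α β θ))
    (s := ball 0 R) (bound := fun θ => ‖w θ‖ * C) (isOpen_ball.mem_nhds hq₀R)
    ?_ ?_ ?_ ?_ ?_ ?_).differentiableAt
  · filter_upwards [isOpen_ball.mem_nhds hq₀R] with q hq
    exact (hcont q hq).aestronglyMeasurable
  · exact (hcont _ hq₀R).intervalIntegrable _ _
  · have h1 : Continuous fun θ : ℝ => fderiv ℂ F (auxRot α β θ q₀) := by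
      refine hfc.comp_continuous (by fun_prop) fun θ => ?_
      exact hsub (hmem _ hq₀R θ)
    have h2 : Continuous fun θ : ℝ =>
        w θ • (fderiv ℂ F (auxRot α β θ q₀)).comp (auxRot α β θ) := by fun_prop
    exact h2.aestronglyMeasurable
  · refine Eventually.of_forall fun θ _ q hq => ?_
    rw [norm_smul]
    gcongr
    have h2 := hC _ (ball_subset_closedBall (hmem q hq θ))
    calc _ ≤ ‖fderiv ℂ F (auxRot α β θ q)‖ * ‖auxRot α β θ‖ :=
          ContinuousLinearMap.opNorm_comp_le _ _
      _ ≤ C * 1 := by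
          gcongr
          · exact (norm_nonneg _).trans h2
          · exact hRn θ
      _ = C := mul_one C
  · exact (by fun_prop : Continuous fun θ => ‖w θ‖ * C).intervalIntegrable _ _
  · refine Eventually.of_forall fun θ _ q hq => ?_
    have h1 : HasFDerivAt F (fderiv ℂ F (auxRot α β θ q)) (auxRot α β θ q) :=
      (hF.differentiableAt (isOpen_ball.mem_nhds (hsub (hmem q hq θ)))).hasFDerivAt
    exact (h1.comp q (auxRot α β θ).hasFDerivAt).const_mul (w θ)

theorem aux_shift_deriv (h : ℝ → ℂ) (hc : Continuous h) (hp : ∀ θ, h (θ + 2 * π) = h θ) :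
    HasDerivAt (fun φ : ℝ => ∫ θ in (0 : ℝ)..2 * π, ((θ : ℂ) - π) * h (θ + φ))
      (2 * π * h 0 - ∫ θ in (0 : ℝ)..2 * π, h θ) 0 := by
  have hc1 : Continuous fun θ : ℝ => (θ : ℂ) * h θ := by fun_prop
  have e : ∀ φ : ℝ, (∫ θ in (0 : ℝ)..2 * π, ((θ : ℂ) - π) * h (θ + φ)) =
      ((∫ θ in (0 : ℝ)..(2 * π + φ), (θ : ℂ) * h θ) - ∫ θ in (0 : ℝ)..φ, (θ : ℂ) * h θ) -
      ((φ : ℂ) + π) * ((∫ θ in (0 : ℝ)..(2 * π + φ), h θ) - ∫ θ in (0 : ℝ)..φ, h θ) := by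
    intro φ
    have h1 : (∫ θ in (0 : ℝ)..2 * π, ((θ : ℂ) - π) * h (θ + φ)) =
        ∫ θ in (0 : ℝ)..2 * π, (fun x : ℝ => ((x : ℂ) - φ - π) * h x) (θ + φ) := by
      congr 1; funext θ; push_cast; ring
    rw [h1, intervalIntegral.integral_comp_add_right (fun x : ℝ => ((x : ℂ) - φ - π) * h x), zero_add,
      intervalIntegral.integral_interval_sub_left (hc1.intervalIntegrable _ _)
        (hc1.intervalIntegrable _ _),
      intervalIntegral.integral_interval_sub_left (hc.intervalIntegrable _ _)
        (hc.intervalIntegrable _ _),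
      ← intervalIntegral.integral_const_mul, ← intervalIntegral.integral_sub
        (hc1.intervalIntegrable _ _)
        ((by fun_prop : Continuous fun θ : ℝ => ((φ : ℂ) + π) * h θ).intervalIntegrable _ _)]
    congr 1; funext θ; ring
  rw [funext e]
  have d1 : ∀ k : ℝ → ℂ, Continuous k → ∀ x : ℝ,
      HasDerivAt (fun φ : ℝ => ∫ θ in (0 : ℝ)..φ, k θ) (k x) x := fun k hk x =>
    intervalIntegral.integral_hasDerivAt_right (hk.intervalIntegrable _ _)
      hk.aestronglyMeasurable.stronglyMeasurableAtFilter hk.continuousAt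
  have d2 : ∀ k : ℝ → ℂ, Continuous k →
      HasDerivAt (fun φ : ℝ => ∫ θ in (0 : ℝ)..(2 * π + φ), k θ) (k (2 * π)) 0 := by
    intro k hk
    have := (d1 k hk (2 * π + 0)).comp_const_add (2 * π) 0
    simpa using this
  have d3 : HasDerivAt (fun φ : ℝ => (φ : ℂ) + π) 1 0 :=
    ((hasDerivAt_id (0 : ℝ)).ofReal_comp).add_const _
  have := ((d2 _ hc1).sub (d1 _ hc1 0)).sub (d3.mul ((d2 _ hc).sub (d1 _ hc 0)))
  refine this.congr_deriv ?_
  have h2 : h (2 * π) = h 0 := by simpa using hp 0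
  simp [h2]

theorem aux_mean (ρ : ℝ) (hρ : 0 < ρ) (f : ℂ → ℂ)
    (hf : DifferentiableOn ℂ f (ball (0 : ℂ) ρ \ {0})) :
    ∃ f₀ : ℂ, (∀ u : ℂ, u ≠ 0 → ‖u‖ < ρ →
      (∫ θ in (0 : ℝ)..2 * π, f (Complex.exp (θ * I) * u)) = 2 * π * f₀) ∧
      (∀ s : ℝ, 0 < s → s < ρ → (2 * (π : ℂ) * I)⁻¹ * (∮ z in C(0, s), f z / z) = f₀) := by
  have hπ : (π : ℂ) ≠ 0 := by exact_mod_cast Real.pi_ne_zero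
  have hopen : IsOpen (ball (0 : ℂ) ρ \ {0}) := isOpen_ball.sdiff isClosed_singleton
  have ann : ∀ s R : ℝ, 0 < s → s ≤ R → R < ρ →
      (∮ z in C(0, R), f z / z) = ∮ z in C(0, s), f z / z := by
    intro s R hs hsR hR
    have := circleIntegral_sub_center_inv_smul_eq_of_differentiable_on_annulus_off_countable
      (c := 0) hs hsR (f := f) (s := ∅) countable_empty
      (hf.continuousOn.mono ?_) ?_
    · simpa [div_eq_inv_mul] using this
    · rintro z ⟨h1, h2⟩
      simp only [mem_closedBall, dist_zero_right, mem_ball, not_lt] at h1 h2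
      refine ⟨by simpa using h1.trans_lt hR, ?_⟩
      rintro rfl
      simp at h2; linarith
    · rintro z ⟨⟨h1, h2⟩, -⟩
      simp only [mem_closedBall, dist_zero_right, mem_ball, not_le] at h1 h2
      refine hf.differentiableAt (hopen.mem_nhds ⟨by simpa using h1.trans hR, ?_⟩)
      rintro rfl
      simp at h2; linarith
  have ann2 : ∀ s R : ℝ, 0 < s → s < ρ → 0 < R → R < ρ →
      (∮ z in C(0, R), f z / z) = ∮ z in C(0, s), f z / z := by
    intro s R hs hs' hR hR'
    rcases le_total s R with h | h
    · exact ann s R hs h hR'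
    · exact (ann R s hR h hs').symm
  refine ⟨(2 * (π : ℂ) * I)⁻¹ * (∮ z in C(0, ρ / 2), f z / z), ?_, ?_⟩
  · intro u hu hu'
    rw [ann2 ‖u‖ (ρ / 2) (by simpa using hu) hu' (by linarith) (by linarith)]
    have h1 : (∮ z in C(0, ‖u‖), f z / z) = I * ∫ θ in (0 : ℝ)..2 * π, f (circleMap 0 ‖u‖ θ) := by
      rw [circleIntegral, ← intervalIntegral.integral_const_mul]
      congr 1; funext θ
      have : circleMap 0 ‖u‖ θ ≠ 0 := circleMap_ne_center (by simpa using hu)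
      simp only [deriv_circleMap, smul_eq_mul]
      field_simp
    have hper : Function.Periodic (fun θ : ℝ => f (circleMap 0 ‖u‖ θ)) (2 * π) := fun θ => by
      simp only [periodic_circleMap 0 ‖u‖ θ]
    have h2 : (∫ θ in (0 : ℝ)..2 * π, f (Complex.exp (θ * I) * u)) =
        ∫ θ in (0 : ℝ)..2 * π, f (circleMap 0 ‖u‖ θ) := by
      have h3 : ∀ θ : ℝ, f (Complex.exp (θ * I) * u) =
          (fun x : ℝ => f (circleMap 0 ‖u‖ x)) (θ + Complex.arg u) := by
        intro θ
        simp only [circleMap, zero_add]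
        congr 1
        conv_lhs => rw [← Complex.norm_mul_exp_arg_mul_I u]
        push_cast
        rw [add_mul, Complex.exp_add]; ring
      simp_rw [h3]
      rw [intervalIntegral.integral_comp_add_right (fun x : ℝ => f (circleMap 0 ‖u‖ x)), zero_add, add_comm (2 * π),
        hper.intervalIntegral_add_eq (Complex.arg u) 0, zero_add]
    rw [h1, h2]
    field_simp
  · intro s hs hs'
    rw [ann2 s (ρ / 2) hs hs' (by linarith) (by linarith)]

theorem aux_density {r : ℝ} {G H : ℂ × ℂ → ℂ} (hG : ContinuousOn G (ball 0 r))
    (hH : ContinuousOn H (ball 0 r))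
    (h : ∀ q ∈ ball (0 : ℂ × ℂ) r, q.1 ≠ 0 → q.2 ≠ 0 → G q = H q) :
    ∀ q ∈ ball (0 : ℂ × ℂ) r, G q = H q := by
  have hd : Dense (({0}ᶜ : Set ℂ) ×ˢ ({0}ᶜ : Set ℂ)) :=
    (dense_compl_singleton 0).prod (dense_compl_singleton 0)
  have := Set.EqOn.of_subset_closure (s := ball (0 : ℂ × ℂ) r ∩ (({0}ᶜ : Set ℂ) ×ˢ ({0}ᶜ : Set ℂ)))
    (t := ball 0 r) (f := G) (g := H) (fun q hq => h q hq.1 hq.2.1 hq.2.2) hG hH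
    inter_subset_left (hd.open_subset_closure_inter isOpen_ball)
  exact this

theorem aux_fderiv_cont {r : ℝ} {M : ℂ × ℂ → ℂ} (hM : DifferentiableOn ℂ M (ball 0 r))
    (c d : ℂ) : ContinuousOn (fun q : ℂ × ℂ => fderiv ℂ M q (c * q.1, d * q.2)) (ball 0 r) := by
  have hfc : ContinuousOn (fderiv ℂ M) (ball 0 r) :=
    (aux_contDiffOn_one isOpen_ball hM).continuousOn_fderiv_of_isOpen isOpen_ball le_rfl
  exact hfc.clm_apply (by fun_prop)

theorem aux_u_lt {r ρ : ℝ} {m n : ℕ} (hn : 0 < n)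
    (hrρ : r ^ (n + m) < ρ) (q : ℂ × ℂ) (hq : q ∈ ball (0 : ℂ × ℂ) r) :
    ‖q.1 ^ n * q.2 ^ m‖ < ρ := by
  have h : ‖q‖ < r := by simpa using hq
  rw [Prod.norm_def, max_lt_iff] at h
  have hr : 0 ≤ r := (norm_nonneg _).trans h.1.le
  rw [norm_mul, norm_pow, norm_pow]
  calc ‖q.1‖ ^ n * ‖q.2‖ ^ m ≤ r ^ n * r ^ m := by
        gcongr
        · exact h.1.le
        · exact h.2.le
    _ = r ^ (n + m) := by rw [pow_add]
    _ < ρ := hrρ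

theorem aux_M (a b m n : ℕ) (hm : 0 < m) (hn : 0 < n) (δ : ℤ) (hδ : δ * δ = 1)
    (hab : (a * m : ℤ) - b * n = δ) (ρ : ℝ) (f : ℂ → ℂ) (f₀ : ℂ)
    (hf₀ : ∀ u : ℂ, u ≠ 0 → ‖u‖ < ρ →
      (∫ θ in (0 : ℝ)..2 * π, f (Complex.exp (θ * I) * u)) = 2 * π * f₀)
    (r : ℝ) (hr : 0 < r) (hrρ : r ^ (n + m) < ρ)
    (F : ℂ × ℂ → ℂ) (hF : DifferentiableOn ℂ F (ball 0 r))
    (hFf : ∀ q ∈ ball (0 : ℂ × ℂ) r, q.1 * q.2 ≠ 0 →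
      F q = q.1 ^ a * q.2 ^ b * f (q.1 ^ n * q.2 ^ m)) (hF0 : F 0 = 0) :
    ∃ M : ℂ × ℂ → ℂ, DifferentiableOn ℂ M (ball 0 r) ∧ M 0 = 0 ∧
      (∀ q ∈ ball (0 : ℂ × ℂ) r, fderiv ℂ M q (m * q.1, (-n) * q.2) = δ * M q) ∧
      (∀ q ∈ ball (0 : ℂ × ℂ) r, fderiv ℂ M q ((-δ * b) * q.1, (δ * a) * q.2) =
        δ / m ^ 2 * (F q - f₀ * (q.1 ^ a * q.2 ^ b))) := by
  have hπ : (π : ℂ) ≠ 0 := by exact_mod_cast Real.pi_ne_zero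
  have hm0 : (m : ℂ) ≠ 0 := by exact_mod_cast hm.ne'
  have hδ' : (δ : ℂ) * δ = 1 := by exact_mod_cast hδ
  have hab' : (a : ℂ) * m - b * n = δ := by exact_mod_cast hab
  set α : ℤ := -δ * b with hα
  set β : ℤ := δ * a with hβ
  set C : ℂ := δ / m ^ 2 * (I / (2 * π)) with hC
  set M : ℂ × ℂ → ℂ := fun q => C * ∫ θ in (0 : ℝ)..2 * π, ((θ : ℂ) - π) * F (auxRot α β θ q)
    with hMdef
  have hMd : DifferentiableOn ℂ M (ball 0 r) :=
    (aux_int_diff hF α β (fun θ => (θ : ℂ) - π) (by fun_prop)).const_mul C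
  have hmem : ∀ q ∈ ball (0 : ℂ × ℂ) r, ∀ θ, auxRot α β θ q ∈ ball (0 : ℂ × ℂ) r := by
    intro q hq θ
    simpa [auxRot_norm] using hq
  have hMat : ∀ q ∈ ball (0 : ℂ × ℂ) r, HasFDerivAt M (fderiv ℂ M q) q := fun q hq =>
    (hMd.differentiableAt (isOpen_ball.mem_nhds hq)).hasFDerivAt
  have hrt : ∀ θ : ℝ, ∀ q : ℂ × ℂ, (auxRot α β θ q).1 ^ a * (auxRot α β θ q).2 ^ b =
      q.1 ^ a * q.2 ^ b := by
    intro θ q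
    rw [auxRot_apply]
    simp only [mul_pow, ← Complex.exp_nat_mul]
    have : Complex.exp (a * (α * θ * I)) * Complex.exp (b * (β * θ * I)) = 1 := by
      rw [← Complex.exp_add, Complex.exp_eq_one_iff]
      refine ⟨0, ?_⟩
      simp only [hα, hβ]; push_cast; ring
    linear_combination (q.1 ^ a * q.2 ^ b) * this
  have hru : ∀ θ : ℝ, ∀ q : ℂ × ℂ, (auxRot α β θ q).1 ^ n * (auxRot α β θ q).2 ^ m =
      Complex.exp (θ * I) * (q.1 ^ n * q.2 ^ m) := by
    intro θ q
    rw [auxRot_apply]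
    simp only [mul_pow, ← Complex.exp_nat_mul]
    have : Complex.exp (n * (α * θ * I)) * Complex.exp (m * (β * θ * I)) =
        Complex.exp (θ * I) := by
      rw [← Complex.exp_add]
      congr 1
      simp only [hα, hβ]; push_cast
      linear_combination (δ * θ * I) * hab' + θ * I * hδ'
    linear_combination (q.1 ^ n * q.2 ^ m) * this
  have hrne : ∀ θ : ℝ, ∀ q : ℂ × ℂ, q.1 ≠ 0 → q.2 ≠ 0 →
      (auxRot α β θ q).1 * (auxRot α β θ q).2 ≠ 0 := by
    intro θ q h1 h2
    rw [auxRot_apply]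
    simp [h1, h2]
  refine ⟨M, hMd, ?_, ?_, ?_⟩
  · have : ∀ θ : ℝ, auxRot α β θ 0 = 0 := fun θ => map_zero _
    simp [hMdef, this, hF0]
  · apply aux_density (aux_fderiv_cont hMd _ _) (by
      have := hMd.continuousOn
      fun_prop)
    intro q hq h1 h2
    set cv : ℂ → ℂ × ℂ := fun τ => (Complex.exp (m * τ) * q.1, Complex.exp (-n * τ) * q.2) with hcv
    have hcv0 : cv 0 = q := by simp [hcv]
    have hcvd : HasDerivAt cv (m * q.1, (-n) * q.2) 0 := by
      have e1 : ∀ k : ℂ, ∀ x : ℂ, HasDerivAt (fun τ : ℂ => Complex.exp (k * τ) * x) (k * x) 0 := by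
        intro k x
        have := (((hasDerivAt_id (0 : ℂ)).const_mul k).cexp).mul_const x
        simpa using this
      exact (e1 _ _).prodMk (e1 _ _)
    have hM1 : HasDerivAt (fun τ => M (cv τ)) (fderiv ℂ M q (m * q.1, (-n) * q.2)) 0 := by
      have h3 : HasFDerivAt M (fderiv ℂ M q) (cv 0) := by rw [hcv0]; exact hMat q hq
      exact h3.comp_hasDerivAt 0 hcvd
    have hM2 : HasDerivAt (fun τ : ℂ => Complex.exp (δ * τ) * M q) (δ * M q) 0 := by
      have := (((hasDerivAt_id (0 : ℂ)).const_mul (δ : ℂ)).cexp).mul_const (M q)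
      simpa using this
    refine hM1.unique (hM2.congr_of_eventuallyEq ?_)
    have hev : ∀ᶠ τ in nhds (0 : ℂ), cv τ ∈ ball (0 : ℂ × ℂ) r := by
      apply hcvd.continuousAt.eventually
      rw [hcv0]
      exact isOpen_ball.mem_nhds hq
    filter_upwards [hev] with τ hτ
    simp only [hMdef]
    rw [mul_left_comm]
    congr 1
    rw [← intervalIntegral.integral_const_mul]
    congr 1
    funext θ
    have hc1 : (cv τ).1 ≠ 0 := by simp [hcv, h1]
    have hc2 : (cv τ).2 ≠ 0 := by simp [hcv, h2]
    rw [hFf _ (hmem _ hτ θ) (hrne θ _ hc1 hc2), hFf _ (hmem _ hq θ) (hrne θ _ h1 h2),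
      hrt, hrt, hru, hru]
    have et : (cv τ).1 ^ a * (cv τ).2 ^ b = Complex.exp (δ * τ) * (q.1 ^ a * q.2 ^ b) := by
      simp only [hcv, mul_pow, ← Complex.exp_nat_mul]
      have : Complex.exp (a * (m * τ)) * Complex.exp (b * (-n * τ)) = Complex.exp (δ * τ) := by
        rw [← Complex.exp_add]
        congr 1
        linear_combination τ * hab'
      linear_combination (q.1 ^ a * q.2 ^ b) * this
    have eu : (cv τ).1 ^ n * (cv τ).2 ^ m = q.1 ^ n * q.2 ^ m := by
      simp only [hcv, mul_pow, ← Complex.exp_nat_mul]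
      have : Complex.exp (n * (m * τ)) * Complex.exp (m * (-n * τ)) = 1 := by
        rw [← Complex.exp_add, Complex.exp_eq_one_iff]
        exact ⟨0, by push_cast; ring⟩
      linear_combination (q.1 ^ n * q.2 ^ m) * this
    rw [et, eu]
    ring
  · apply aux_density (aux_fderiv_cont hMd _ _) (by
      have := hF.continuousOn
      fun_prop)
    intro q hq h1 h2
    have hcont : Continuous fun θ : ℝ => F (auxRot α β θ q) :=
      aux_rot_cont hF.continuousOn α β q hq
    have hsd := aux_shift_deriv (fun θ => F (auxRot α β θ q)) hcont
      (fun θ => by simp only [auxRot_per])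
    have hM1 : HasDerivAt (fun φ : ℝ => M (auxRot α β φ q))
        (C * (2 * π * F q - ∫ θ in (0 : ℝ)..2 * π, F (auxRot α β θ q))) 0 := by
      have := hsd.const_mul C
      simp only [auxRot_zero] at this
      refine this.congr_of_eventuallyEq (Eventually.of_forall fun φ => ?_)
      simp only [hMdef, auxRot_add]
    have hrd : HasDerivAt (fun φ : ℝ => auxRot α β φ q)
        (I • ((-δ * b : ℂ) * q.1, (δ * a : ℂ) * q.2)) 0 := by
      have e1 : ∀ k : ℤ, ∀ x : ℂ, HasDerivAt (fun φ : ℝ => Complex.exp (k * φ * I) * x)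
          (k * I * x) 0 := by
        intro k x
        have h0 : HasDerivAt (fun φ : ℝ => (φ : ℂ)) 1 0 := (hasDerivAt_id (0 : ℝ)).ofReal_comp
        have := (((h0.const_mul (k : ℂ)).mul_const I).cexp).mul_const x
        simpa using this
      have := (e1 α q.1).prodMk (e1 β q.2)
      simp only [auxRot_apply]
      refine this.congr_deriv ?_
      simp only [hα, hβ]
      ext
      · simp; ring
      · simp; ring
    have hM2 : HasDerivAt (fun φ : ℝ => M (auxRot α β φ q))
        (fderiv ℂ M q (I • ((-δ * b : ℂ) * q.1, (δ * a : ℂ) * q.2))) 0 := by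
      have h3 : HasFDerivAt M (fderiv ℂ M q) (auxRot α β 0 q) := by
        rw [auxRot_zero]; exact hMat q hq
      exact (h3.restrictScalars ℝ).comp_hasDerivAt (0 : ℝ) hrd
    have huniq := hM2.unique hM1
    rw [map_smul, smul_eq_mul] at huniq
    have hmean : (∫ θ in (0 : ℝ)..2 * π, F (auxRot α β θ q)) =
        2 * π * f₀ * (q.1 ^ a * q.2 ^ b) := by
      have : ∀ θ : ℝ, F (auxRot α β θ q) = (q.1 ^ a * q.2 ^ b) *
          f (Complex.exp (θ * I) * (q.1 ^ n * q.2 ^ m)) := by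
        intro θ
        rw [hFf _ (hmem _ hq θ) (hrne θ _ h1 h2), hrt, hru]
      simp_rw [this]
      rw [intervalIntegral.integral_const_mul, hf₀ _ (by simp [h1, h2])
        (aux_u_lt hn hrρ q hq)]
      ring
    rw [hmean, hC] at huniq
    have h4 : I * fderiv ℂ M q ((-δ * b : ℂ) * q.1, (δ * a : ℂ) * q.2) =
      I * (δ / m ^ 2 * (F q - f₀ * (q.1 ^ a * q.2 ^ b))) := by
      rw [huniq]
      field_simp
    exact mul_left_cancel₀ I_ne_zero h4

theorem aux_mono_deriv (n m : ℕ) (q : ℂ × ℂ) (c1 c2 : ℂ) :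
    HasDerivAt (fun s : ℂ => (q + s • (c1 * q.1, c2 * q.2)).1 ^ n *
      (q + s • (c1 * q.1, c2 * q.2)).2 ^ m) (q.1 ^ n * q.2 ^ m * (n * c1 + m * c2)) 0 := by
  have e : ∀ (k : ℕ) (c x : ℂ), HasDerivAt (fun s : ℂ => (x + s * (c * x)) ^ k)
      (x ^ k * (k * c)) 0 := by
    intro k c x
    have h1 : HasDerivAt (fun s : ℂ => x ^ k * (1 + s * c) ^ k) (x ^ k * (k * c)) 0 := by
      have := ((((hasDerivAt_id (0 : ℂ)).mul_const c).const_add 1).pow k).const_mul (x ^ k)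
      simpa using this
    refine h1.congr_of_eventuallyEq (Eventually.of_forall fun s => ?_)
    simp only [← mul_pow]
    congr 1; ring
  have := (e n c1 q.1).mul (e m c2 q.2)
  refine (this.congr_deriv ?_).congr_of_eventuallyEq (Eventually.of_forall fun s => ?_)
  · simp; ring
  · simp

theorem aux_final (a b m n : ℕ) (hm : 0 < m) (hn : 0 < n) (δ : ℤ) (hδ : δ * δ = 1)
    (hab : (a * m : ℤ) - b * n = δ)
    (X Y : ℂ × ℂ → ℂ × ℂ) (g : ℂ → ℂ) (F : ℂ × ℂ → ℂ)
    (hX : ∀ q : ℂ × ℂ, X q =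
      (q.1 ^ a * q.2 ^ b * ((m : ℂ) * q.1), q.1 ^ a * q.2 ^ b * (-(n : ℂ) * q.2)))
    (hY : ∀ q : ℂ × ℂ, Y q =
      (g (q.1 ^ n * q.2 ^ m) * (q.1 * (-((b : ℂ) * m) + F q)),
       g (q.1 ^ n * q.2 ^ m) * (q.2 * ((a : ℂ) * m - ((n : ℂ) / (m : ℂ)) * F q))))
    (c : ℂ) (gh : ℂ → ℂ) (d : ℂ → ℂ → ℂ)
    (hd : Differentiable ℂ (fun z : ℂ × ℂ => d z.1 z.2))
    (hd0 : ∀ u, d 0 u = 1) (hdnz : ∀ S, d S 0 ≠ 0)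
    (hdc : ∀ S S' u, d S' u ≠ 0 → d (S + S') u = d S (u / d S' u) * d S' u)
    (hdS : ∀ S u, d S u ≠ 0 →
      HasDerivAt (fun S => d S u) (-(δ * m * gh (u / d S u)) * d S u) S)
    (r r₁ ρ₁ : ℝ) (hr : 0 < r) (hr₁ : 0 < r₁) (hρ₁ : 0 < ρ₁)
    (k : ℂ → ℂ) (hk : DifferentiableOn ℂ k (ball 0 ρ₁)) (hk0 : k 0 = 1)
    (hkg : ∀ u ∈ ball (0 : ℂ) ρ₁, g u * (k u + u * deriv k u) = k u * gh (u * k u))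
    (M : ℂ × ℂ → ℂ) (hM : DifferentiableOn ℂ M (ball 0 r₁)) (hM0 : M 0 = 0)
    (hMN : ∀ q ∈ ball (0 : ℂ × ℂ) r₁, fderiv ℂ M q (m * q.1, (-n) * q.2) = δ * M q)
    (hMR : ∀ q ∈ ball (0 : ℂ × ℂ) r₁,
      g (q.1 ^ n * q.2 ^ m) * fderiv ℂ M q ((-δ * b) * q.1, (δ * a) * q.2) =
        δ / m ^ 2 * (g (q.1 ^ n * q.2 ^ m) * F q - m * c * (q.1 ^ a * q.2 ^ b))) :
    ∃ ε : ℝ, 0 < ε ∧ ε < r ∧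
      ∃ (W : Set ((ℂ × ℂ) × (ℂ × ℂ))) (Φ : (ℂ × ℂ) × (ℂ × ℂ) → ℂ × ℂ),
        IsMaxLocalC2Action {q : ℂ × ℂ | ‖q.1‖ < ε ∧ ‖q.2‖ < ε} X Y W Φ := by
  have hm0 : (m : ℂ) ≠ 0 := by exact_mod_cast hm.ne'
  have hδ' : (δ : ℂ) * δ = 1 := by exact_mod_cast hδ
  have hab' : (a : ℂ) * m - b * n = δ := by exact_mod_cast hab
  set u : ℂ × ℂ → ℂ := fun q => q.1 ^ n * q.2 ^ m with hu
  have hucd : ContDiff ℂ 1 u := by rw [hu]; fun_prop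
  have hu0 : u 0 = 0 := by simp [hu, hn.ne']
  set Q : ℂ × ℂ → ℂ := fun q => 1 + δ * M q with hQ
  set ψ : ℂ × ℂ → ℂ × ℂ := fun q =>
    auxTw (-δ * m) (δ * n) (δ * b) (-δ * a) (Q q) ((k (u q))⁻¹) q with hψ
  -- the good set
  have hG : ∀ᶠ q in nhds (0 : ℂ × ℂ), q ∈ ball (0 : ℂ × ℂ) r₁ ∧ Q q ≠ 0 ∧
      u q ∈ ball (0 : ℂ) ρ₁ ∧ k (u q) ≠ 0 := by
    have c1 : ContinuousAt Q 0 := by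
      have := (hM.differentiableAt (isOpen_ball.mem_nhds (mem_ball_self hr₁))).continuousAt
      rw [hQ]; fun_prop
    have c2 : ContinuousAt u 0 := hucd.continuous.continuousAt
    have c3 : ContinuousAt (fun q => k (u q)) 0 := by
      have : ContinuousAt k (u 0) := by
        rw [hu0]
        exact (hk.differentiableAt (isOpen_ball.mem_nhds (mem_ball_self hρ₁))).continuousAt
      exact this.comp c2
    refine (show ∀ᶠ q in nhds (0 : ℂ × ℂ), q ∈ ball (0 : ℂ × ℂ) r₁ from
      isOpen_ball.mem_nhds (mem_ball_self hr₁)).and ((c1.eventually_ne (by simp [hQ, hM0])).and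
      ((c2.eventually (isOpen_ball.mem_nhds (by rw [hu0]; exact mem_ball_self hρ₁))).and
      (c3.eventually_ne (by simp [hu0, hk0]))))
  have hQcd : ∀ q ∈ ball (0 : ℂ × ℂ) r₁, ContDiffAt ℂ 1 Q q := by
    intro q hq
    have : ContDiffAt ℂ 1 M q := (aux_contDiffOn_one isOpen_ball hM).contDiffAt
      (isOpen_ball.mem_nhds hq)
    rw [hQ]; fun_prop
  have hkcd : ∀ z ∈ ball (0 : ℂ) ρ₁, ContDiffAt ℂ 1 k z := fun z hz =>
    (aux_contDiffOn_one isOpen_ball hk).contDiffAt (isOpen_ball.mem_nhds hz)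
  have hkucd : ∀ q, u q ∈ ball (0 : ℂ) ρ₁ → k (u q) ≠ 0 →
      ContDiffAt ℂ 1 (fun q => (k (u q))⁻¹) q := by
    intro q h1 h2
    have : ContDiffAt ℂ 1 (fun q => k (u q)) q := (hkcd _ h1).comp q hucd.contDiffAt
    exact this.inv h2
  have hψcd : ∀ᶠ q in nhds (0 : ℂ × ℂ), ContDiffAt ℂ 1 ψ q := by
    filter_upwards [hG] with q ⟨h1, h2, h3, h4⟩
    exact auxTw_contDiffAt _ _ _ _ _ _ _ q contDiffAt_id (hQcd q h1) (hkucd q h3 h4) h2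
      (inv_ne_zero h4)
  -- directional derivatives
  have hline : ∀ (q v : ℂ × ℂ), HasDerivAt (fun s : ℂ => q + s • v) v 0 := by
    intro q v
    simpa using ((hasDerivAt_id (0 : ℂ)).smul_const v).const_add q
  have hdir : ∀ (H : ℂ × ℂ → ℂ) (q v : ℂ × ℂ), DifferentiableAt ℂ H q →
      HasDerivAt (fun s : ℂ => H (q + s • v)) (fderiv ℂ H q v) 0 := by
    intro H q v hH
    have h1 : HasFDerivAt H (fderiv ℂ H q) (q + (0 : ℂ) • v) := by simpa using hH.hasFDerivAt
    exact h1.comp_hasDerivAt 0 (hline q v)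
  have hdirψ : ∀ (q v : ℂ × ℂ), DifferentiableAt ℂ ψ q →
      HasDerivAt (fun s : ℂ => ψ (q + s • v)) (fderiv ℂ ψ q v) 0 := by
    intro q v hH
    have h1 : HasFDerivAt ψ (fderiv ℂ ψ q) (q + (0 : ℂ) • v) := by simpa using hH.hasFDerivAt
    exact h1.comp_hasDerivAt 0 (hline q v)
  have hψ0cd : ContDiffAt ℂ 1 ψ 0 := hψcd.self_of_nhds
  have hψ0 : ψ 0 = 0 := by simp [hψ, auxTw]
  have hψ' : HasFDerivAt ψ ((ContinuousLinearEquiv.refl ℂ (ℂ × ℂ) : ℂ × ℂ →L[ℂ] ℂ × ℂ)) 0 := by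
    have h1 := hψ0cd.differentiableAt one_ne_zero
    have h2 : fderiv ℂ ψ 0 = ((ContinuousLinearEquiv.refl ℂ (ℂ × ℂ) : ℂ × ℂ →L[ℂ] ℂ × ℂ)) := by
      refine ContinuousLinearMap.ext fun v => ?_
      obtain ⟨g1, g2, g3, g4⟩ := hG.self_of_nhds
      have e1 := hdirψ 0 v h1
      have e2 := auxTw_hasDerivAt (-δ * m) (δ * n) (δ * b) (-δ * a) _
        (fun s : ℂ => Q (0 + s • v)) (fun s : ℂ => (k (u (0 + s • v)))⁻¹) _ _ _ 0 (hline 0 v)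
        (hdir Q 0 v ((hQcd 0 g1).differentiableAt one_ne_zero))
        (hdir (fun q => (k (u q))⁻¹) 0 v ((hkucd 0 g3 g4).differentiableAt one_ne_zero))
        (by simpa using g2) (by simpa using g4)
      rw [e1.unique e2]
      simp [hu0, hk0, hQ, hM0]
    rw [← h2]
    exact h1.hasFDerivAt
  set e := hψ0cd.toOpenPartialHomeomorph ψ hψ' one_ne_zero with he
  have hecoe : (e : ℂ × ℂ → ℂ × ℂ) = ψ := hψ0cd.toOpenPartialHomeomorph_coe hψ' one_ne_zero
  have hsrc : e.source ∈ nhds (0 : ℂ × ℂ) :=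
    e.open_source.mem_nhds (hψ0cd.mem_toOpenPartialHomeomorph_source hψ' one_ne_zero)
  have hinv : ∀ᶠ q in nhds (0 : ℂ × ℂ), DifferentiableAt ℂ e.symm (ψ q) := by
    have h1 : ContDiffAt ℂ 1 e.symm (ψ 0) := hψ0cd.to_localInverse hψ' one_ne_zero
    have h2 := h1.eventually (by simp)
    have h3 := hψ0cd.continuousAt.eventually h2
    filter_upwards [h3] with q hq using hq.differentiableAt one_ne_zero
  obtain ⟨ε', hε', hball⟩ := Metric.eventually_nhds_iff_ball.1
    ((hG.and hψcd).and ((show ∀ᶠ q in nhds (0 : ℂ × ℂ), q ∈ e.source from hsrc).and hinv))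
  refine ⟨min ε' (r / 2), lt_min hε' (by linarith), (min_le_right _ _).trans_lt (by linarith), ?_⟩
  have hset : {q : ℂ × ℂ | ‖q.1‖ < min ε' (r / 2) ∧ ‖q.2‖ < min ε' (r / 2)} =
      ball (0 : ℂ × ℂ) (min ε' (r / 2)) := by
    ext q
    rw [mem_ball_zero_iff, Prod.norm_def, max_lt_iff]
    rfl
  rw [hset]
  have hgood := fun q (hq : q ∈ ball (0 : ℂ × ℂ) (min ε' (r / 2))) =>
    hball q (ball_subset_ball (min_le_left _ _) hq)
  have hpos : 0 < min ε' (r / 2) := lt_min hε' (by linarith)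
  -- derivative along monomial directions
  have hmon : ∀ q ∈ ball (0 : ℂ × ℂ) (min ε' (r / 2)), ∀ c1 c2 : ℂ,
      fderiv ℂ ψ q (c1 * q.1, c2 * q.2) =
      ((ψ q).1 * (c1 + (-δ * m * (δ * fderiv ℂ M q (c1 * q.1, c2 * q.2)) / Q q +
          δ * b * (-(deriv k (u q) * (u q * (n * c1 + m * c2))) / k (u q)))),
       (ψ q).2 * (c2 + (δ * n * (δ * fderiv ℂ M q (c1 * q.1, c2 * q.2)) / Q q +
          -δ * a * (-(deriv k (u q) * (u q * (n * c1 + m * c2))) / k (u q))))) := by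
    intro q hq c1 c2
    obtain ⟨⟨⟨g1, g2, g3, g4⟩, g5⟩, g6, g7⟩ := hgood q hq
    have e1 := hdirψ q (c1 * q.1, c2 * q.2) (g5.differentiableAt one_ne_zero)
    have eM := (hdir M q (c1 * q.1, c2 * q.2)
      (hM.differentiableAt (isOpen_ball.mem_nhds g1))).const_mul (δ : ℂ)
    have eQ : HasDerivAt (fun s : ℂ => Q (q + s • (c1 * q.1, c2 * q.2)))
        (δ * fderiv ℂ M q (c1 * q.1, c2 * q.2)) 0 := eM.const_add 1
    have eu : HasDerivAt (fun s : ℂ => u (q + s • (c1 * q.1, c2 * q.2)))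
      (u q * (n * c1 + m * c2)) 0 := aux_mono_deriv n m q c1 c2
    have ek : HasDerivAt k (deriv k (u q)) (u (q + (0 : ℂ) • (c1 * q.1, c2 * q.2))) := by
      simpa using (hk.differentiableAt (isOpen_ball.mem_nhds g3)).hasDerivAt
    have ek2 : HasDerivAt (fun s : ℂ => k (u (q + s • (c1 * q.1, c2 * q.2))))
        (deriv k (u q) * (u q * (n * c1 + m * c2))) 0 := ek.comp 0 eu
    have ek3 := ek2.fun_inv (by simpa using g4)
    have e2 := auxTw_hasDerivAt (-δ * m) (δ * n) (δ * b) (-δ * a) _ _ _ _ _ _ 0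
      (hline q (c1 * q.1, c2 * q.2)) eQ ek3 (by simpa using g2) (by simpa using g4)
    rw [e1.unique e2]
    simp only [hψ, auxTw, zero_smul, add_zero]
    ext
    · push_cast
      field_simp
    · push_cast
      field_simp
  refine aux_normal a b m n δ hδ hab X Y c gh d hd hd0 hdnz hdc hdS e _ isOpen_ball
    (convex_ball _ _).isPreconnected ⟨0, mem_ball_self hpos⟩ (fun q hq => (hgood q hq).2.1)
    ?_ ?_ ?_ ?_
  · intro q hq
    rw [hecoe]
    exact (hgood q hq).1.2.differentiableAt one_ne_zero
  · intro q hq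
    rw [hecoe]
    exact (hgood q hq).2.2
  · intro q hq
    rw [hecoe]
    obtain ⟨⟨⟨g1, g2, g3, g4⟩, g5⟩, g6, g7⟩ := hgood q hq
    have ht : (ψ q).1 ^ a * (ψ q).2 ^ b = q.1 ^ a * q.2 ^ b / Q q :=
      aux_tw_t a b m n δ hδ hab _ _ g2 (inv_ne_zero g4) q
    set t := q.1 ^ a * q.2 ^ b with htdef
    have hXq : X q = ((t * m) * q.1, (t * (-n)) * q.2) := by
      rw [hX]; ext <;> simp <;> ring
    have hDM : fderiv ℂ M q ((t * m) * q.1, (t * (-n)) * q.2) = t * (δ * M q) := by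
      rw [← hMN q g1, ← smul_eq_mul t (fderiv ℂ M q _), ← map_smul]
      congr 1
      ext <;> simp <;> ring
    rw [hXq, hmon q hq, hDM, ht]
    have hQM : Q q = 1 + δ * M q := rfl
    ext
    · simp only
      congr 1
      have : (n * (t * m) + m * (t * -n) : ℂ) = 0 := by ring
      rw [this]
      field_simp
      rw [hQM]
      simp
      linear_combination (-t * m * δ * M q * k (u q)) * hδ'
    · simp only
      congr 1
      have : (n * (t * m) + m * (t * -n) : ℂ) = 0 := by ring
      rw [this]
      field_simp
      rw [hQM]
      simp
      linear_combination (t * δ * M q * n * k (u q)) * hδ'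
  · intro q hq
    rw [hecoe]
    obtain ⟨⟨⟨g1, g2, g3, g4⟩, g5⟩, g6, g7⟩ := hgood q hq
    have ht : (ψ q).1 ^ a * (ψ q).2 ^ b = q.1 ^ a * q.2 ^ b / Q q :=
      aux_tw_t a b m n δ hδ hab _ _ g2 (inv_ne_zero g4) q
    have hu' : (ψ q).1 ^ n * (ψ q).2 ^ m = u q * k (u q) := by
      have := aux_tw_u a b m n δ hδ hab _ _ g2 (inv_ne_zero g4) q
      rw [hψ]; simp only []; rw [this, div_inv_eq_mul]
    have hR := hMR q g1
    have hN := hMN q g1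
    change g (u q) * _ = δ / m ^ 2 * (g (u q) * F q - _) at hR
    have hYq : Y q = ((g (u q) * (-(b * m) + F q)) * q.1,
        (g (u q) * (a * m - (n / m) * F q)) * q.2) := by
      rw [hY]; ext <;> simp [hu] <;> ring
    have hkq := hkg (u q) g3
    set t := q.1 ^ a * q.2 ^ b with htdef
    set G := g (u q) with hGdef
    have hDM : fderiv ℂ M q ((G * (-(b * m) + F q)) * q.1, (G * (a * m - (n / m) * F q)) * q.2) =
        δ * m * (δ / m ^ 2 * (G * F q - m * c * t)) + G * F q / m * (δ * M q) := by
      rw [← hR, ← hN, ← mul_assoc (δ * m : ℂ) G,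
        ← smul_eq_mul (δ * m * G : ℂ) (fderiv ℂ M q _),
        ← smul_eq_mul (G * F q / m : ℂ) (fderiv ℂ M q _), ← map_smul, ← map_smul, ← map_add]
      congr 1
      ext
      · simp
        field_simp
        linear_combination (b * m * G * q.1 ) * hδ'
      · simp
        field_simp
        linear_combination (-a * m ^ 2 * G * q.2 ) * hδ'
    rw [hYq, hmon q hq, hDM, ht, hu']
    have hQM : Q q = 1 + δ * M q := rfl
    have hsum : (n * (G * (-(b * m) + F q)) + m * (G * (a * m - (n / m) * F q)) : ℂ) =
        δ * m * G := by
      field_simp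
      linear_combination (m * G) * hab'
    rw [hsum]
    have hgh : gh (u q * k (u q)) = G * (k (u q) + u q * deriv k (u q)) / k (u q) := by
      rw [hkq]; field_simp
    rw [hgh]
    have hQ' : δ * m * (δ * (δ * m * (δ / m ^ 2 * (G * F q - m * c * t)) +
        G * F q / m * (δ * M q))) = G * F q * Q q - m * c * t := by
      rw [hQM]
      field_simp
      linear_combination ((δ * δ + 1) * (G * F q - m * c * t) + G * F q * δ * M q) * hδ'
    generalize hE : (δ * m * (δ / m ^ 2 * (G * F q - m * c * t)) +
        G * F q / m * (δ * M q) : ℂ) = E at hQ' ⊢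
    have hE2 : (δ : ℂ) * (δ * E) = E := by linear_combination E * hδ'
    have hE3 : (m : ℂ) * E = G * F q * Q q - m * c * t := by
      linear_combination hQ' - m * E * hδ'
    have hE4 : E = (G * F q * Q q - m * c * t) / m := by
      rw [← hE3]; field_simp
    ext
    · simp only
      congr 1
      have z1 : (-δ * m * (δ * E) / Q q : ℂ) = -(G * F q) + m * c * t / Q q := by
        have : (-δ * m * (δ * E) : ℂ) = -(G * F q * Q q - m * c * t) := by
          linear_combination -hQ'
        rw [this]; field_simp; ring
      have z2 : (δ * b * (-(deriv k (u q) * (u q * (δ * m * G))) / k (u q)) : ℂ) =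
          -(b * m * G * (u q * deriv k (u q))) / k (u q) := by
        field_simp
        linear_combination (-b * deriv k (u q) * u q * G) * hδ'
      rw [z1, z2]
      field_simp
      ring
    · simp only
      congr 1
      have z1 : (δ * n * (δ * E) / Q q : ℂ) = n / m * (G * F q) - n * c * t / Q q := by
        have : (δ * n * (δ * E) : ℂ) = n * ((G * F q * Q q - m * c * t) / m) := by
          rw [← hE4]; linear_combination n * E * hδ'
        rw [this]; field_simp
      have z2 : (-δ * a * (-(deriv k (u q) * (u q * (δ * m * G))) / k (u q)) : ℂ) =
          (a * m * G * (u q * deriv k (u q))) / k (u q) := by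
        field_simp
        linear_combination (a * deriv k (u q) * u q * G) * hδ'
      rw [z1, z2]
      field_simp
      ring

theorem aux_fact (ρ : ℝ) (hρ : 0 < ρ) (h : ℂ → ℂ) (hh : DifferentiableOn ℂ h (ball 0 ρ))
    (h0 : h 0 = 0) : ∃ q : ℂ → ℂ, DifferentiableOn ℂ q (ball 0 ρ) ∧ (∀ u, h u = u * q u) ∧
      q 0 = deriv h 0 := by
  refine ⟨dslope h 0, (Complex.differentiableOn_dslope (ball_mem_nhds 0 hρ)).2 hh, fun u => ?_,
    dslope_same _ _⟩
  have := sub_smul_dslope h 0 u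
  simp only [sub_zero, smul_eq_mul, h0] at this
  exact this.symm

theorem aux_prim (ρ : ℝ) (q : ℂ → ℂ) (hq : DifferentiableOn ℂ q (ball 0 ρ)) :
    ∃ L : ℂ → ℂ, L 0 = 0 ∧ ∀ z ∈ ball (0 : ℂ) ρ, HasDerivAt L (q z) z := by
  obtain ⟨L, hL⟩ := hq.isExactOn_ball
  exact ⟨fun z => L z - L 0, by simp, fun z hz => (hL z hz).sub_const _⟩

theorem aux_shrink (ρ : ℝ) (hρ : 0 < ρ) (h : ℂ → ℂ) (hh : DifferentiableOn ℂ h (ball 0 ρ))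
    (h0 : h 0 ≠ 0) : ∃ ρ₁ : ℝ, 0 < ρ₁ ∧ ρ₁ ≤ ρ ∧ ∀ u ∈ ball (0 : ℂ) ρ₁, h u ≠ 0 := by
  have c := (hh.differentiableAt (ball_mem_nhds 0 hρ)).continuousAt.eventually_ne h0
  obtain ⟨ε, hε, hb⟩ := Metric.eventually_nhds_iff_ball.1 c
  exact ⟨min ε ρ, lt_min hε hρ, min_le_right _ _,
    fun u hu => hb u (ball_subset_ball (min_le_left _ _) hu)⟩

theorem aux_k1 (ρ : ℝ) (hρ : 0 < ρ) (g : ℂ → ℂ) (hg : DifferentiableOn ℂ g (ball 0 ρ))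
    (g0 : g 0 ≠ 0) : ∃ ρ₁ : ℝ, 0 < ρ₁ ∧ ρ₁ ≤ ρ ∧ ∃ L : ℂ → ℂ, L 0 = 0 ∧
      DifferentiableOn ℂ L (ball 0 ρ₁) ∧
      ∀ u ∈ ball (0 : ℂ) ρ₁, g u * (1 + u * deriv L u) = g 0 := by
  obtain ⟨ρ₁, hρ₁, hle, hne⟩ := aux_shrink ρ hρ g hg g0
  have hg' := hg.mono (ball_subset_ball hle)
  obtain ⟨q, hq, hqe, -⟩ := aux_fact ρ₁ hρ₁ (fun u => g 0 / g u - 1)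
    (((differentiableOn_const _).div hg' hne).sub_const 1) (by simp [g0])
  obtain ⟨L, hL0, hL⟩ := aux_prim ρ₁ q hq
  refine ⟨ρ₁, hρ₁, hle, L, hL0, fun z hz => (hL z hz).differentiableAt.differentiableWithinAt,
    fun u hu => ?_⟩
  rw [(hL u hu).deriv, ← hqe u]
  have := hne u hu
  field_simp
  ring

theorem aux_k2 (ρ : ℝ) (hρ : 0 < ρ) (g : ℂ → ℂ) (hg : DifferentiableOn ℂ g (ball 0 ρ))
    (g0 : g 0 = 0) (g2 : iteratedDeriv 2 g 0 = 0) (g1 : deriv g 0 ≠ 0) :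
    ∃ ρ₁ : ℝ, 0 < ρ₁ ∧ ρ₁ ≤ ρ ∧ ∃ k : ℂ → ℂ, k 0 = 1 ∧
      DifferentiableOn ℂ k (ball 0 ρ₁) ∧
      ∀ u ∈ ball (0 : ℂ) ρ₁, g u * (k u + u * deriv k u) = k u * (deriv g 0 * (u * k u)) := by
  obtain ⟨p, hp, hgp, hp0⟩ := aux_fact ρ hρ g hg g0
  have hp' : deriv p 0 = 0 := by
    have e1 : deriv g =ᶠ[nhds 0] fun u => p u + u * deriv p u := by
      filter_upwards [ball_mem_nhds (0 : ℂ) hρ] with u hu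
      have h1 := (hp.differentiableAt (isOpen_ball.mem_nhds hu)).hasDerivAt
      have h2 := (hasDerivAt_id u).fun_mul h1
      have : g = fun u => u * p u := funext hgp
      rw [this]
      simpa using h2.deriv
    have hd := ((hp.deriv isOpen_ball).differentiableAt (ball_mem_nhds (0 : ℂ) hρ)).hasDerivAt
    have h1 := (hp.differentiableAt (ball_mem_nhds (0 : ℂ) hρ)).hasDerivAt
    have h3 := (h1.fun_add ((hasDerivAt_id (0 : ℂ)).fun_mul hd)).deriv
    rw [iteratedDeriv_succ, iteratedDeriv_one, e1.deriv_eq] at g2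
    simp only [id_eq] at h3
    rw [h3] at g2
    simp only [one_mul, zero_mul, add_zero] at g2
    linear_combination g2 / 2
  have hp0' : p 0 ≠ 0 := by rw [hp0]; exact g1
  obtain ⟨ρ₁, hρ₁, hle, hne⟩ := aux_shrink ρ hρ p hp hp0'
  have hpm := hp.mono (ball_subset_ball hle)
  obtain ⟨q1, hq1, hqe1, hq10⟩ := aux_fact ρ₁ hρ₁ (fun u => p 0 / p u - 1)
    (((differentiableOn_const _).div hpm hne).sub_const 1) (by simp [hp0'])
  have hq1z : q1 0 = 0 := by
    rw [hq10]
    have h1 := (hp.differentiableAt (ball_mem_nhds (0 : ℂ) hρ)).hasDerivAt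
    have := (((hasDerivAt_const (0 : ℂ) (p 0)).fun_div h1 hp0').sub_const 1).deriv
    rw [this, hp']; simp
  obtain ⟨q, hq, hqe, -⟩ := aux_fact ρ₁ hρ₁ q1 hq1 hq1z
  obtain ⟨L, hL0, hL⟩ := aux_prim ρ₁ q hq
  have hLd : DifferentiableOn ℂ L (ball 0 ρ₁) :=
    fun z hz => (hL z hz).differentiableAt.differentiableWithinAt
  have hv : DifferentiableOn ℂ (fun u => 1 - u * L u) (ball 0 ρ₁) := by fun_prop
  obtain ⟨ρ₂, hρ₂, hle₂, hne₂⟩ := aux_shrink ρ₁ hρ₁ _ hv (by simp)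
  refine ⟨ρ₂, hρ₂, hle₂.trans hle, fun u => (1 - u * L u)⁻¹, by simp,
    (hv.mono (ball_subset_ball hle₂)).inv hne₂, fun u hu => ?_⟩
  have hu1 := ball_subset_ball hle₂ hu
  have hpu := hne u hu1
  have hvu : 1 - u * L u ≠ 0 := hne₂ u hu
  have hdv := (((hasDerivAt_id u).fun_mul (hL u hu1)).const_sub 1).fun_inv hvu
  simp only [id_eq, one_mul] at hdv
  have key : p 0 = p u * (1 + u * (u * q u)) := by
    rw [← hqe u, ← hqe1 u]; field_simp; ring
  rw [hdv.deriv, hgp u, ← hp0, key]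
  field_simp
  ring

theorem aux_d1 (μ : ℂ) (δ : ℤ) (m : ℕ) (g0 : ℂ) (hμ : μ = -(δ * m * g0)) :
    Differentiable ℂ (fun z : ℂ × ℂ => (fun S _ : ℂ => Complex.exp (μ * S)) z.1 z.2) ∧
    (∀ S : ℂ, HasDerivAt (fun S => Complex.exp (μ * S))
      (-(δ * m * g0) * Complex.exp (μ * S)) S) := by
  constructor
  · fun_prop
  · intro S
    have := ((hasDerivAt_id S).const_mul μ).cexp
    refine this.congr_deriv ?_
    simp [hμ]; ring

/-- **Proposition 3.1.**
Under one of the conditions (1) `g(0) ≠ 0`, or (2) `g(0) = g''(0) = f₀ = 0` and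
`g'(0) ≠ 0` (where `f₀` is the constant Laurent coefficient of `f` at `0`), the abelian
Lie algebra generated by the commuting pair `X`, `Y` of the family (1.1) is univalent on a
sufficiently small polydisc around the origin: `X` and `Y` generate a maximal local
`ℂ²`-action on `B_ε` for some `ε ∈ (0, r)`. -/
theorem univalent_on_small_polydisc
    (a b m n : ℕ) (ha : 0 < a) (hb : 0 < b) (hm : 0 < m) (hn : 0 < n)
    (hab : (a * m : ℤ) - (b * n : ℤ) = 1 ∨ (a * m : ℤ) - (b * n : ℤ) = -1)
    (ρ : ℝ) (hρ : 0 < ρ) (g f : ℂ → ℂ)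
    (hg : DifferentiableOn ℂ g (ball (0 : ℂ) ρ))
    (hf : DifferentiableOn ℂ f (ball (0 : ℂ) ρ \ {0}))
    (r : ℝ) (hr : 0 < r) (hrρ : r ^ (n + m) < ρ)
    (F : ℂ × ℂ → ℂ)
    (hF : DifferentiableOn ℂ F {q : ℂ × ℂ | ‖q.1‖ < r ∧ ‖q.2‖ < r})
    (hFf : ∀ q ∈ {q : ℂ × ℂ | ‖q.1‖ < r ∧ ‖q.2‖ < r}, q.1 * q.2 ≠ 0 →
      F q = q.1 ^ a * q.2 ^ b * f (q.1 ^ n * q.2 ^ m))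
    (hF0 : F (0, 0) = 0) (hdF0 : fderiv ℂ F (0, 0) = 0)
    (X Y : ℂ × ℂ → ℂ × ℂ)
    (hX : ∀ q : ℂ × ℂ, X q =
      (q.1 ^ a * q.2 ^ b * ((m : ℂ) * q.1), q.1 ^ a * q.2 ^ b * (-(n : ℂ) * q.2)))
    (hY : ∀ q : ℂ × ℂ, Y q =
      (g (q.1 ^ n * q.2 ^ m) * (q.1 * (-((b : ℂ) * m) + F q)),
       g (q.1 ^ n * q.2 ^ m) * (q.2 * ((a : ℂ) * m - ((n : ℂ) / (m : ℂ)) * F q))))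
    (hcond : g 0 ≠ 0 ∨
      (g 0 = 0 ∧ iteratedDeriv 2 g 0 = 0 ∧
        (∀ s : ℝ, 0 < s → s < ρ →
          (2 * (π : ℂ) * I)⁻¹ * (∮ z in C(0, s), f z / z) = 0) ∧
        deriv g 0 ≠ 0)) :
    ∃ ε : ℝ, 0 < ε ∧ ε < r ∧
      ∃ (W : Set ((ℂ × ℂ) × (ℂ × ℂ))) (Φ : (ℂ × ℂ) × (ℂ × ℂ) → ℂ × ℂ),
        IsMaxLocalC2Action {q : ℂ × ℂ | ‖q.1‖ < ε ∧ ‖q.2‖ < ε} X Y W Φ := by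
  have hset : {q : ℂ × ℂ | ‖q.1‖ < r ∧ ‖q.2‖ < r} = ball (0 : ℂ × ℂ) r := by
    ext q
    rw [mem_ball_zero_iff, Prod.norm_def, max_lt_iff]
    rfl
  rw [hset] at hF hFf
  obtain ⟨δ, hδ, hab⟩ : ∃ δ : ℤ, δ * δ = 1 ∧ (a * m : ℤ) - b * n = δ := by
    rcases hab with h | h
    · exact ⟨1, by norm_num, h⟩
    · exact ⟨-1, by norm_num, h⟩
  have hm0 : (m : ℂ) ≠ 0 := by exact_mod_cast hm.ne'
  have hδ' : (δ : ℂ) * δ = 1 := by exact_mod_cast hδ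
  have hab' : (a : ℂ) * m - b * n = δ := by exact_mod_cast hab
  obtain ⟨f₀, hf₀, hf₀'⟩ := aux_mean ρ hρ f hf
  obtain ⟨M, hM, hM0, hMN, hMR⟩ := aux_M a b m n hm hn δ hδ hab ρ f f₀ hf₀ r hr hrρ F hF hFf hF0
  rcases hcond with g0 | ⟨g0, g2, hres, g1⟩
  · obtain ⟨ρ₁, hρ₁, hle, L, hL0, hL, hLg⟩ := aux_k1 ρ hρ g hg g0
    obtain ⟨hd1, hd2⟩ := aux_d1 (-(δ * m * g 0)) δ m (g 0) rfl
    -- a smaller polydisc on which u stays in the small disc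
    obtain ⟨r₁, hr₁, hr₁r, hur⟩ : ∃ r₁ : ℝ, 0 < r₁ ∧ r₁ ≤ r ∧
        ∀ q ∈ ball (0 : ℂ × ℂ) r₁, q.1 ^ n * q.2 ^ m ∈ ball (0 : ℂ) ρ₁ := by
      have c : ContinuousAt (fun q : ℂ × ℂ => q.1 ^ n * q.2 ^ m) 0 := by fun_prop
      have := c.eventually (isOpen_ball.mem_nhds
        (show ((0 : ℂ × ℂ).1 ^ n * (0 : ℂ × ℂ).2 ^ m) ∈ ball (0 : ℂ) ρ₁ by
          simpa [hn.ne'] using hρ₁))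
      obtain ⟨ε, hε, hb⟩ := Metric.eventually_nhds_iff_ball.1 this
      exact ⟨min ε r, lt_min hε hr, min_le_right _ _,
        fun u hu => hb u (ball_subset_ball (min_le_left _ _) hu)⟩
    set H : ℂ × ℂ → ℂ := fun q => q.1 ^ a * q.2 ^ b * L (q.1 ^ n * q.2 ^ m) with hH
    have hLu : ∀ q ∈ ball (0 : ℂ × ℂ) r₁, DifferentiableAt ℂ L (q.1 ^ n * q.2 ^ m) := fun q hq =>
      hL.differentiableAt (isOpen_ball.mem_nhds (hur q hq))
    have hHd : ∀ q ∈ ball (0 : ℂ × ℂ) r₁, DifferentiableAt ℂ H q := by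
      intro q hq
      have h1 : DifferentiableAt ℂ (fun q : ℂ × ℂ => L (q.1 ^ n * q.2 ^ m)) q :=
        DifferentiableAt.comp (g := L) q (hLu q hq) (by fun_prop)
      rw [hH]
      fun_prop
    have hMd : ∀ q ∈ ball (0 : ℂ × ℂ) r₁, DifferentiableAt ℂ M q := fun q hq =>
      hM.differentiableAt (isOpen_ball.mem_nhds (ball_subset_ball hr₁r hq))
    have hHder : ∀ q ∈ ball (0 : ℂ × ℂ) r₁, ∀ c1 c2 : ℂ, fderiv ℂ H q (c1 * q.1, c2 * q.2) =
        (a * c1 + b * c2) * H q + q.1 ^ a * q.2 ^ b * (deriv L (q.1 ^ n * q.2 ^ m) *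
          (q.1 ^ n * q.2 ^ m * (n * c1 + m * c2))) := by
      intro q hq c1 c2
      have h0 : HasDerivAt (fun s : ℂ => q + s • (c1 * q.1, c2 * q.2)) (c1 * q.1, c2 * q.2) 0 := by
        simpa using ((hasDerivAt_id (0 : ℂ)).smul_const (c1 * q.1, c2 * q.2)).const_add q
      have h1 : HasFDerivAt H (fderiv ℂ H q) (q + (0 : ℂ) • (c1 * q.1, c2 * q.2)) := by
        simpa using (hHd q hq).hasFDerivAt
      have e1 := h1.comp_hasDerivAt 0 h0
      have eL : HasDerivAt L (deriv L (q.1 ^ n * q.2 ^ m))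
          ((q + (0 : ℂ) • (c1 * q.1, c2 * q.2)).1 ^ n *
            (q + (0 : ℂ) • (c1 * q.1, c2 * q.2)).2 ^ m) := by
        simpa using (hLu q hq).hasDerivAt
      have e2 := (aux_mono_deriv a b q c1 c2).fun_mul (eL.comp 0 (aux_mono_deriv n m q c1 c2))
      rw [e1.unique e2]
      simp [hH]
      ring
    have hsub : ∀ q ∈ ball (0 : ℂ × ℂ) r₁, ∀ v, fderiv ℂ (fun q => M q - δ * f₀ / m ^ 2 * H q) q v =
        fderiv ℂ M q v - δ * f₀ / m ^ 2 * fderiv ℂ H q v := by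
      intro q hq v
      rw [fderiv_fun_sub (hMd q hq) ((hHd q hq).const_mul _), fderiv_const_mul (hHd q hq)]
      simp
    refine aux_final a b m n hm hn δ hδ hab X Y g F hX hY (g 0 * f₀ / m) (fun _ => g 0)
      (fun S _ => Complex.exp (-(δ * m * g 0) * S)) hd1 (by simp) (fun S => Complex.exp_ne_zero _)
      ?_ (fun S u _ => hd2 S) r r₁ ρ₁ hr hr₁ hρ₁ (fun u => Complex.exp (L u)) hL.cexp
      (by simp [hL0]) ?_ (fun q => M q - δ * f₀ / m ^ 2 * H q)
      (fun q hq => ((hMd q hq).sub ((hHd q hq).const_mul _)).differentiableWithinAt) ?_ ?_ ?_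
    · intro S S' u _
      rw [← Complex.exp_add]
      congr 1; ring
    · intro u hu
      have h1 := (hL.differentiableAt (isOpen_ball.mem_nhds hu)).hasDerivAt.cexp
      rw [h1.deriv, ← hLg u hu]
      ring
    · simp [hM0, hH, hL0, hn.ne']
    · intro q hq
      rw [hsub q hq, hHder q hq, hMN q (ball_subset_ball hr₁r hq)]
      linear_combination (-(δ * f₀ / m ^ 2 * H q)) * hab'
    · intro q hq
      rw [hsub q hq, hHder q hq, hMR q (ball_subset_ball hr₁r hq)]
      have e := hLg _ (hur q hq)
      have e1 : (a * (-δ * b) + b * (δ * a) : ℂ) = 0 := by ring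
      have e2 : (n * (-δ * b) + m * (δ * a) : ℂ) = 1 := by linear_combination δ * hab' + hδ'
      rw [e1, e2]
      rw [← e]
      field_simp
      ring
  · have hz : f₀ = 0 := by
      rw [← hf₀' (ρ / 2) (by linarith) (by linarith)]
      exact hres (ρ / 2) (by linarith) (by linarith)
    obtain ⟨ρ₁, hρ₁, hle, k, hk0, hk, hkg⟩ := aux_k2 ρ hρ g hg g0 g2 g1
    refine aux_final a b m n hm hn δ hδ hab X Y g F hX hY 0 (fun w => deriv g 0 * w)
      (fun S u => 1 - δ * m * deriv g 0 * u * S) (by fun_prop) (by simp) (by simp)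
      ?_ ?_ r r ρ₁ hr hr hρ₁ k hk hk0 hkg M hM hM0 hMN ?_
    · intro S S' u hne
      field_simp
      ring
    · intro S u hne
      have := ((hasDerivAt_id S).const_mul (δ * m * deriv g 0 * u)).const_sub 1
      refine this.congr_deriv ?_
      field_simp
    · intro q hq
      rw [hMR q hq, hz]
      ring
end

section
/- Let E be a finite-dimensional complex normed space, Ω ⊆ E an open set, and Z : Ω → E a holomorphic vector field. Assume that the real flow of Z is complete, i.e. for every p ∈ Ω there exists a differentiable curve γ : ℝ → Ω with γ(0) = p and γ'(t) = Z(γ(t)) for all t ∈ ℝ. Then Z is semicomplete on Ω: for every p ∈ Ω there exist a connected open set V ⊆ ℂ with 0 ∈ V and a holomorphic map φ : V → Ω such that φ(0) = p, φ'(T) = Z(φ(T)) for all T ∈ V, and such that for every compact set K ⊆ Ω and every sequence (Tᵢ) in V converging to a point of the frontier of V in ℂ, φ(Tᵢ) ∉ K for all sufficiently large i. -/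
open Set Filter

/-- A holomorphic vector field `Z` is semicomplete on `Ω`: each point admits a maximal
integral curve, defined on a connected open subset of `ℂ` containing `0`, which leaves
every compact subset of `Ω` along any sequence of times converging to the frontier of its
domain. -/
def Semicomplete {E : Type*} [NormedAddCommGroup E] [NormedSpace ℂ E]
    (Ω : Set E) (Z : E → E) : Prop :=
  ∀ p ∈ Ω, ∃ (V : Set ℂ) (φ : ℂ → E), IsOpen V ∧ IsConnected V ∧ (0 : ℂ) ∈ V ∧
    (∀ T ∈ V, φ T ∈ Ω) ∧ φ 0 = p ∧
    (∀ T ∈ V, HasDerivWithinAt φ (Z (φ T)) V T) ∧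
    ∀ K ⊆ Ω, IsCompact K → ∀ T : ℕ → ℂ, (∀ i, T i ∈ V) →
      ∀ Tl ∈ frontier V, Tendsto T atTop (nhds Tl) →
      ∀ᶠ i in atTop, φ (T i) ∉ K

open Metric Topology

namespace RealCompleteAux

variable {E : Type*} [NormedAddCommGroup E] [NormedSpace ℂ E]

/-- Local boundedness and Lipschitz estimates, from Cauchy estimates on complex lines. -/
lemma exists_lip {Ω : Set E} (hΩ : IsOpen Ω) {Z : E → E} (hZ : DifferentiableOn ℂ Z Ω)
    {q : E} (hq : q ∈ Ω) :
    ∃ ρ : ℝ, 0 < ρ ∧ ∃ M : ℝ, 0 < M ∧ ∃ L : NNReal, closedBall q (2 * ρ) ⊆ Ω ∧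
      (∀ x ∈ closedBall q (2 * ρ), ‖Z x‖ ≤ M) ∧ LipschitzOnWith L Z (closedBall q (2 * ρ)) := by
  have hc : ContinuousAt Z q := (hZ.differentiableAt (hΩ.mem_nhds hq)).continuousAt
  have hb : ∀ᶠ x in 𝓝 q, ‖Z x‖ < ‖Z q‖ + 1 :=
    hc.norm.eventually_lt_const (lt_add_one _)
  obtain ⟨ε, hε, h⟩ := eventually_nhds_iff_ball.mp (hb.and (hΩ.mem_nhds hq))
  have hM : 0 < ‖Z q‖ + 1 := by positivity
  refine ⟨ε / 8, by positivity, ‖Z q‖ + 1, hM, ((‖Z q‖ + 1) / (ε / 4)).toNNReal, ?_, ?_, ?_⟩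
  · intro x hx
    refine (h x ?_).2
    rw [mem_closedBall] at hx; rw [mem_ball]; linarith
  · intro x hx
    refine (h x ?_).1.le
    rw [mem_closedBall] at hx; rw [mem_ball]; linarith
  · have hd : ∀ x ∈ ball q ε, DifferentiableAt ℂ Z x := fun x hx =>
      hZ.differentiableAt (hΩ.mem_nhds (h x hx).2)
    have hbd : ∀ x ∈ closedBall q (2 * (ε / 8)), ‖fderiv ℂ Z x‖ ≤ (‖Z q‖ + 1) / (ε / 4) := by
      intro x hx
      rw [mem_closedBall] at hx
      refine ContinuousLinearMap.opNorm_le_bound _ (by positivity) fun v => ?_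
      by_cases hv : v = 0
      · simp [hv]
      have hv' : 0 < ‖v‖ := norm_pos_iff.2 hv
      have hR : 0 < ε / 4 / ‖v‖ := by positivity
      have hmem : ∀ u : ℂ, ‖u‖ ≤ ε / 4 / ‖v‖ → x + u • v ∈ ball q ε := by
        intro u hu
        rw [mem_ball]
        have h1 : ‖u • v‖ ≤ ε / 4 := by
          rw [norm_smul]; rwa [le_div_iff₀ hv'] at hu
        have h2 : dist (x + u • v) x ≤ ε / 4 := by simpa [dist_eq_norm] using h1
        have := dist_triangle (x + u • v) x q
        linarith
      have hdv : ∀ u : ℂ, ‖u‖ ≤ ε / 4 / ‖v‖ →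
          HasDerivAt (fun u : ℂ => Z (x + u • v)) (fderiv ℂ Z (x + u • v) v) u := by
        intro u hu
        have h1 : HasDerivAt (fun u : ℂ => x + u • v) v u := by
          simpa using ((hasDerivAt_id u).smul_const v).const_add x
        exact (hd _ (hmem u hu)).hasFDerivAt.comp_hasDerivAt u h1
      have hdc : DiffContOnCl ℂ (fun u : ℂ => Z (x + u • v)) (ball 0 (ε / 4 / ‖v‖)) := by
        apply DifferentiableOn.diffContOnCl
        rw [closure_ball _ hR.ne']
        intro u hu
        exact (hdv u (by simpa using hu)).differentiableAt.differentiableWithinAt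
      have := Complex.norm_deriv_le_of_forall_mem_sphere_norm_le hR hdc (C := ‖Z q‖ + 1)
        (fun u hu => (h _ (hmem u (by simpa using (mem_sphere.1 hu).le))).1.le)
      have h0 := (hdv 0 (by simpa using hR.le)).deriv
      rw [h0] at this
      simp only [zero_smul, add_zero] at this
      calc _ ≤ _ := this
        _ = _ := by field_simp
    refine Convex.lipschitzOnWith_of_nnnorm_fderiv_le (𝕜 := ℂ) (fun x hx => hd x ?_) ?_
      (convex_closedBall _ _)
    · rw [mem_closedBall] at hx; rw [mem_ball]; linarith
    · intro x hx
      rw [← NNReal.coe_le_coe, Real.coe_toNNReal _ (by positivity)]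
      exact hbd x hx

/-- Complex-time Picard–Lindelöf with locally uniform existence time. -/
lemma exists_local [CompleteSpace E] {Ω : Set E} (hΩ : IsOpen Ω) {Z : E → E}
    (hZ : DifferentiableOn ℂ Z Ω) {q : E} (hq : q ∈ Ω) :
    ∃ r : ℝ, 0 < r ∧ ∃ U ∈ 𝓝 q, ∀ p ∈ U, ∃ f : ℂ → E, f 0 = p ∧
      ∀ T ∈ ball (0 : ℂ) r, f T ∈ Ω ∧ HasDerivAt f (Z (f T)) T := by
  obtain ⟨ρ, hρ, M, hM, L, hsub, hbd, hlip⟩ := exists_lip hΩ hZ hq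
  set r : ℝ := min (ρ / M) (1 / (2 * ((L : ℝ) + 1))) with hr
  have hL : (0 : ℝ) ≤ L := L.2
  have hr0 : 0 < r := by positivity
  have hrM : M * r ≤ ρ := by
    have : r ≤ ρ / M := min_le_left _ _
    rw [le_div_iff₀ hM] at this; linarith
  have hrL : (L : ℝ) * r ≤ 1 / 2 := by
    have : r ≤ 1 / (2 * ((L : ℝ) + 1)) := min_le_right _ _
    rw [le_div_iff₀ (by positivity)] at this; nlinarith
  refine ⟨r, hr0, closedBall q ρ, closedBall_mem_nhds q hρ, fun p hp => ?_⟩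
  rw [mem_closedBall] at hp
  have h0 : (0 : ℂ) ∈ ball (0 : ℂ) r := mem_ball_self hr0
  let P : (ℂ → E) → Prop := fun f => DifferentiableOn ℂ f (ball 0 r) ∧
    (∀ T ∈ ball (0 : ℂ) r, f T ∈ closedBall q (2 * ρ)) ∧ f 0 = p
  have step : ∀ f : {f // P f}, ∃ g : {f // P f},
      ∀ T ∈ ball (0 : ℂ) r, HasDerivAt g.1 (Z (f.1 T)) T := by
    rintro ⟨f, hf1, hf2, hf3⟩
    have hd : DifferentiableOn ℂ (fun T => Z (f T)) (ball 0 r) :=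
      hZ.comp hf1 (fun T hT => hsub (hf2 T hT))
    obtain ⟨g, hg0, hg⟩ := hd.isExactOn_ball.with_val_at 0 p
    refine ⟨⟨g, fun T hT => (hg T hT).differentiableAt.differentiableWithinAt, fun T hT => ?_,
      hg0⟩, hg⟩
    have := (convex_ball (0 : ℂ) r).norm_image_sub_le_of_norm_hasDerivWithin_le
      (fun T hT => (hg T hT).hasDerivWithinAt) (fun T hT => hbd _ (hf2 T hT)) h0 hT
    rw [hg0, sub_zero] at this
    rw [mem_ball_zero_iff] at hT
    rw [mem_closedBall]
    have h3 : dist (g T) p ≤ ρ := by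
      rw [dist_eq_norm]
      nlinarith
    linarith [dist_triangle (g T) p q]
  choose N hN using step
  let F0 : {f // P f} := ⟨fun _ => p, differentiableOn_const _,
    fun T _ => by rw [mem_closedBall]; linarith, rfl⟩
  let F : ℕ → {f // P f} := fun n => N^[n] F0
  have hF : ∀ n, ∀ T ∈ ball (0 : ℂ) r, HasDerivAt (F (n + 1)).1 (Z ((F n).1 T)) T := by
    intro n
    have : F (n + 1) = N (F n) := Function.iterate_succ_apply' N n F0
    rw [this]
    exact hN (F n)
  have hdist : ∀ n, ∀ T ∈ ball (0 : ℂ) r,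
      dist ((F n).1 T) ((F (n + 1)).1 T) ≤ (8 * ρ) / 2 / 2 ^ n := by
    intro n
    induction n with
    | zero =>
      intro T hT
      have h1 := mem_closedBall.1 ((F 0).2.2.1 T hT)
      have h2 := mem_closedBall.1 ((F (0 + 1)).2.2.1 T hT)
      have := dist_triangle_right ((F 0).1 T) ((F (0 + 1)).1 T) q
      simp only [pow_zero, div_one]
      linarith
    | succ n ih =>
      intro T hT
      have hb : ∀ T ∈ ball (0 : ℂ) r, ‖Z ((F n).1 T) - Z ((F (n + 1)).1 T)‖
          ≤ L * ((8 * ρ) / 2 / 2 ^ n) := by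
        intro T hT
        rw [← dist_eq_norm]
        refine (hlip.dist_le_mul _ ((F n).2.2.1 T hT) _ ((F (n + 1)).2.2.1 T hT)).trans ?_
        gcongr
        exact ih T hT
      have := (convex_ball (0 : ℂ) r).norm_image_sub_le_of_norm_hasDerivWithin_le
        (fun T hT => ((hF n T hT).sub (hF (n + 1) T hT)).hasDerivWithinAt) hb h0 hT
      simp only [Pi.sub_apply, (F (n + 1)).2.2.2, (F (n + 1 + 1)).2.2.2, sub_self, sub_zero] at this
      rw [dist_eq_norm]
      refine this.trans ?_
      rw [mem_ball_zero_iff] at hT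
      have hA : 0 ≤ (8 * ρ) / 2 / 2 ^ n := by positivity
      calc (L : ℝ) * ((8 * ρ) / 2 / 2 ^ n) * ‖T‖ ≤ L * ((8 * ρ) / 2 / 2 ^ n) * r := by gcongr
        _ = (L * r) * ((8 * ρ) / 2 / 2 ^ n) := by ring
        _ ≤ 1 / 2 * ((8 * ρ) / 2 / 2 ^ n) := by gcongr
        _ = _ := by rw [pow_succ]; field_simp
  have hlim : ∀ T : ℂ, ∃ y : E, T ∈ ball (0 : ℂ) r →
      Tendsto (fun n => (F n).1 T) atTop (𝓝 y) := by
    intro T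
    by_cases hT : T ∈ ball (0 : ℂ) r
    · obtain ⟨y, hy⟩ := cauchySeq_tendsto_of_complete
        (cauchySeq_of_le_geometric_two (f := fun n => (F n).1 T) (fun n => hdist n T hT))
      exact ⟨y, fun _ => hy⟩
    · exact ⟨0, fun h => absurd h hT⟩
  choose f hf using hlim
  have hunif : TendstoUniformlyOn (fun n => (F n).1) f atTop (ball 0 r) := by
    rw [Metric.tendstoUniformlyOn_iff]
    intro ε hε
    have h1 : Tendsto (fun n : ℕ => (8 * ρ) / 2 ^ n) atTop (𝓝 0) :=
      tendsto_const_nhds.div_atTop (tendsto_pow_atTop_atTop_of_one_lt (by norm_num))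
    filter_upwards [h1.eventually_lt_const hε] with n hn T hT
    rw [dist_comm]
    exact (dist_le_of_le_geometric_two_of_tendsto (f := fun n => (F n).1 T)
      (fun n => hdist n T hT) (hf T hT) n).trans_lt hn
  have hdiff : ∀ᶠ n in atTop, DifferentiableOn ℂ (F n).1 (ball 0 r) :=
    Eventually.of_forall fun n => (F n).2.1
  have hfd := hunif.tendstoLocallyUniformlyOn.differentiableOn hdiff isOpen_ball
  have hder := hunif.tendstoLocallyUniformlyOn.deriv hdiff isOpen_ball
  refine ⟨f, ?_, fun T hT => ?_⟩
  · refine tendsto_nhds_unique (hf 0 h0) ?_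
    simp only [(F _).2.2.2]
    exact tendsto_const_nhds
  · have hmem : f T ∈ closedBall q (2 * ρ) :=
      isClosed_closedBall.mem_of_tendsto (hf T hT) (Eventually.of_forall fun n => (F n).2.2.1 T hT)
    refine ⟨hsub hmem, ?_⟩
    have h1 : HasDerivAt f (deriv f T) T :=
      (hfd.differentiableAt (isOpen_ball.mem_nhds hT)).hasDerivAt
    have h2 : Tendsto (fun n => deriv (F (n + 1)).1 T) atTop (𝓝 (deriv f T)) :=
      (hder.tendsto_at hT).comp (tendsto_add_atTop_nat 1)
    have h3 : Tendsto (fun n => Z ((F n).1 T)) atTop (𝓝 (Z (f T))) :=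
      ((hZ.differentiableAt (hΩ.mem_nhds (hsub hmem))).continuousAt.tendsto).comp (hf T hT)
    have h4 : (fun n => deriv (F (n + 1)).1 T) = fun n => Z ((F n).1 T) :=
      funext fun n => (hF n T hT).deriv
    rw [h4] at h2
    rw [tendsto_nhds_unique h3 h2]
    exact h1

/-- Uniform existence time on compact sets. -/
lemma exists_uniform [CompleteSpace E] {Ω : Set E} (hΩ : IsOpen Ω) {Z : E → E}
    (hZ : DifferentiableOn ℂ Z Ω) {K : Set E} (hK : IsCompact K) (hKΩ : K ⊆ Ω) :
    ∃ r : ℝ, 0 < r ∧ ∀ p ∈ K, ∃ f : ℂ → E, f 0 = p ∧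
      ∀ T ∈ ball (0 : ℂ) r, f T ∈ Ω ∧ HasDerivAt f (Z (f T)) T := by
  refine hK.induction_on (p := fun K => ∃ r : ℝ, 0 < r ∧ ∀ p ∈ K, ∃ f : ℂ → E, f 0 = p ∧
      ∀ T ∈ ball (0 : ℂ) r, f T ∈ Ω ∧ HasDerivAt f (Z (f T)) T) ?_ ?_ ?_ ?_
  · exact ⟨1, one_pos, by simp⟩
  · rintro s t hst ⟨r, hr, h⟩
    exact ⟨r, hr, fun p hp => h p (hst hp)⟩
  · rintro s t ⟨r, hr, h⟩ ⟨r', hr', h'⟩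
    refine ⟨min r r', lt_min hr hr', fun p hp => ?_⟩
    rcases hp with hp | hp
    · obtain ⟨f, hf, hf'⟩ := h p hp
      exact ⟨f, hf, fun T hT => hf' T (ball_subset_ball (min_le_left _ _) hT)⟩
    · obtain ⟨f, hf, hf'⟩ := h' p hp
      exact ⟨f, hf, fun T hT => hf' T (ball_subset_ball (min_le_right _ _) hT)⟩
  · intro x hx
    obtain ⟨r, hr, U, hU, h⟩ := exists_local hΩ hZ (hKΩ hx)
    exact ⟨U, mem_nhdsWithin_of_mem_nhds hU, r, hr, h⟩

/-- `f` solves `f' = c • Z f` on the set `I` of real times, staying in `Ω`. -/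
def Sol (Ω : Set E) (Z : E → E) (c : ℂ) (I : Set ℝ) (f : ℝ → E) : Prop :=
  ∀ t ∈ I, f t ∈ Ω ∧ HasDerivAt f (c • Z (f t)) t

lemma Sol.mono {Ω : Set E} {Z : E → E} {c : ℂ} {I J : Set ℝ} {f : ℝ → E}
    (h : Sol Ω Z c J f) (hIJ : I ⊆ J) : Sol Ω Z c I f := fun t ht => h t (hIJ ht)

lemma Sol.congr {Ω : Set E} {Z : E → E} {c : ℂ} {I : Set ℝ} {f g : ℝ → E}
    (h : Sol Ω Z c I f) (hI : IsOpen I) (hfg : EqOn g f I) : Sol Ω Z c I g := by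
  intro t ht
  rw [hfg ht]
  refine ⟨(h t ht).1, (h t ht).2.congr_of_eventuallyEq ?_⟩
  filter_upwards [hI.mem_nhds ht] with x hx using hfg hx

lemma Sol.shift {Ω : Set E} {Z : E → E} {c : ℂ} {I J : Set ℝ} {f : ℝ → E} (a : ℝ)
    (h : Sol Ω Z c J f) (hIJ : ∀ t ∈ I, t + a ∈ J) : Sol Ω Z c I (fun t => f (t + a)) := by
  intro t ht
  obtain ⟨h1, h2⟩ := h _ (hIJ t ht)
  exact ⟨h1, h2.comp_add_const t a⟩

/-- Restriction of a complex-time solution to a real line `T₀ + c ℝ`. -/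
lemma Sol.of_complex {Ω : Set E} {Z : E → E} {V : Set ℂ} {φ : ℂ → E}
    (h : ∀ T ∈ V, φ T ∈ Ω ∧ HasDerivAt φ (Z (φ T)) T) (T₀ c : ℂ) {I : Set ℝ}
    (hI : ∀ t ∈ I, T₀ + t * c ∈ V) : Sol Ω Z c I (fun t : ℝ => φ (T₀ + t * c)) := by
  intro t ht
  obtain ⟨h1, h2⟩ := h _ (hI t ht)
  refine ⟨h1, ?_⟩
  have h3 : HasDerivAt (fun t : ℝ => T₀ + (t : ℂ) * c) c t := by
    simpa using ((Complex.ofRealCLM.hasDerivAt (x := t)).mul_const c).const_add T₀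
  exact h2.scomp t h3

/-- Uniqueness for real-time solutions. -/
lemma Sol.unique {Ω : Set E} (hΩ : IsOpen Ω) {Z : E → E} (hZ : DifferentiableOn ℂ Z Ω)
    {c : ℂ} {I : Set ℝ} (hI : IsOpen I) (hI' : IsPreconnected I) {f g : ℝ → E}
    (hf : Sol Ω Z c I f) (hg : Sol Ω Z c I g) {t₀ : ℝ} (ht₀ : t₀ ∈ I) (h : f t₀ = g t₀) :
    EqOn f g I := by
  have key : ∀ t ∈ I, f t = g t → f =ᶠ[𝓝 t] g := by
    intro t ht hfg
    obtain ⟨ρ, hρ, M, -, L, -, -, hlip⟩ := exists_lip hΩ hZ (hf t ht).1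
    have hU : closedBall (f t) (2 * ρ) ∈ 𝓝 (f t) := closedBall_mem_nhds _ (by positivity)
    have hlip' : LipschitzOnWith (‖c‖₊ * L) (fun x => c • Z x) (closedBall (f t) (2 * ρ)) :=
      (lipschitzWith_smul c).comp_lipschitzOnWith hlip
    refine ODE_solution_unique_of_eventually (v := fun _ x => c • Z x)
      (s := fun _ => closedBall (f t) (2 * ρ)) (Eventually.of_forall fun _ => hlip') ?_ ?_ hfg
    · filter_upwards [hI.mem_nhds ht, (hf t ht).2.continuousAt.eventually_mem hU] with x hx hx'
      exact ⟨(hf x hx).2, hx'⟩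
    · rw [hfg] at hU
      rw [hfg]
      filter_upwards [hI.mem_nhds ht, (hg t ht).2.continuousAt.eventually_mem hU] with x hx hx'
      exact ⟨(hg x hx).2, hx'⟩
  have hsub : I ⊆ {t | f =ᶠ[𝓝 t] g} := by
    refine hI'.subset_of_closure_inter_subset isOpen_setOfPred_eventually_nhds
      ⟨t₀, ht₀, key t₀ ht₀ h⟩ ?_
    rintro t ⟨ht, htI⟩
    refine key t htI ?_
    by_contra hne
    have h1 : ∀ᶠ x in 𝓝 t, f x ≠ g x :=
      ((hf t htI).2.continuousAt.ne_iff_eventually_ne (hg t htI).2.continuousAt).1 hne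
    rw [mem_closure_iff_frequently] at ht
    obtain ⟨x, hx, hx'⟩ := (ht.and_eventually h1).exists
    exact hx' hx.eq_of_nhds
  exact fun t ht => (hsub ht).eq_of_nhds

/-- Gluing two solutions. -/
lemma Sol.glue {Ω : Set E} (hΩ : IsOpen Ω) {Z : E → E} (hZ : DifferentiableOn ℂ Z Ω)
    {c : ℂ} {I J : Set ℝ} (hI : IsOpen I) (hI' : IsPreconnected I) (hJ : IsOpen J)
    (hJ' : IsPreconnected J) {f g : ℝ → E}
    (hf : Sol Ω Z c I f) (hg : Sol Ω Z c J g) {t₀ : ℝ} (ht₀ : t₀ ∈ I) (ht₀' : t₀ ∈ J)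
    (h : f t₀ = g t₀) : ∃ k : ℝ → E, EqOn k f I ∧ Sol Ω Z c (I ∪ J) k := by
  classical
  have hIJ : IsPreconnected (I ∩ J) :=
    (hI'.ordConnected.inter hJ'.ordConnected).isPreconnected
  have heq : EqOn f g (I ∩ J) := Sol.unique hΩ hZ (hI.inter hJ) hIJ
    (hf.mono inter_subset_left) (hg.mono inter_subset_right) ⟨ht₀, ht₀'⟩ h
  have e1 : EqOn (I.piecewise f g) f I := piecewise_eqOn I f g
  have e2 : EqOn (I.piecewise f g) g J := by
    intro t ht
    by_cases htI : t ∈ I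
    · rw [piecewise_eq_of_mem _ _ _ htI]; exact heq ⟨htI, ht⟩
    · rw [piecewise_eq_of_notMem _ _ _ htI]
  refine ⟨I.piecewise f g, e1, ?_⟩
  rintro t (ht | ht)
  · exact hf.congr hI e1 t ht
  · exact hg.congr hJ e2 t ht

/-- The key lemma: sweeping an imaginary-time solution by the complete real flow gives a
holomorphic solution on a strip. -/
lemma strip [CompleteSpace E] {Ω : Set E} (hΩ : IsOpen Ω) {Z : E → E}
    (hZ : DifferentiableOn ℂ Z Ω) {Γ : E → ℝ → E} (hΓ : ∀ p ∈ Ω, Sol Ω Z 1 univ (Γ p))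
    (hΓ0 : ∀ p ∈ Ω, Γ p 0 = p) {I : Set ℝ} (hI : IsOpen I)
    {χ : ℝ → E} (hχ : Sol Ω Z Complex.I I χ) :
    ∀ T ∈ Complex.im ⁻¹' I, Γ (χ T.im) T.re ∈ Ω ∧
      HasDerivAt (fun T : ℂ => Γ (χ T.im) T.re) (Z (Γ (χ T.im) T.re)) T := by
  intro T₀ hT₀
  have hq : χ T₀.im ∈ Ω := (hχ _ hT₀).1
  refine ⟨(hΓ _ hq _ (mem_univ _)).1, ?_⟩
  set q := χ T₀.im with hqdef
  set γ := Γ q with hγdef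
  set R : ℝ := |T₀.re| + 1 with hR
  have hR0 : 0 < R := by positivity
  have hγc : Continuous γ :=
    continuous_iff_continuousAt.2 fun t => (hΓ q hq t (mem_univ _)).2.continuousAt
  have hKc : IsCompact (γ '' Icc (-R) R) := isCompact_Icc.image hγc
  have hKΩ : γ '' Icc (-R) R ⊆ Ω := by
    rintro _ ⟨t, -, rfl⟩
    exact (hΓ q hq t (mem_univ _)).1
  obtain ⟨r₁, hr₁, hloc⟩ := exists_uniform hΩ hZ hKc hKΩ
  obtain ⟨r₂, hr₂, hIr⟩ := Metric.isOpen_iff.1 hI _ hT₀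
  obtain ⟨r, hr, hrr₁, hrr₂⟩ : ∃ r : ℝ, 0 < r ∧ 2 * r ≤ r₁ ∧ r ≤ r₂ :=
    ⟨min (r₁ / 2) r₂, by positivity, by linarith [min_le_left (r₁ / 2) r₂], min_le_right _ _⟩
  have hloc' : ∀ t : ℝ, ∃ f : ℂ → E, t ∈ Icc (-R) R → (f 0 = γ t ∧
      ∀ T ∈ ball (0 : ℂ) r₁, f T ∈ Ω ∧ HasDerivAt f (Z (f T)) T) := by
    intro t
    by_cases ht : t ∈ Icc (-R) R
    · obtain ⟨f, hf⟩ := hloc (γ t) (mem_image_of_mem _ ht)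
      exact ⟨f, fun _ => hf⟩
    · exact ⟨0, fun h => absurd h ht⟩
  choose f hf using hloc'
  have hball : ∀ a b : ℝ, |a| < r → |b| < r → (a : ℂ) + b * Complex.I ∈ ball (0 : ℂ) r₁ := by
    intro a b ha hb
    rw [mem_ball_zero_iff]
    calc _ ≤ ‖(a : ℂ)‖ + ‖(b : ℂ) * Complex.I‖ := norm_add_le _ _
      _ = |a| + |b| := by simp
      _ < r₁ := by linarith
  have hJo : IsOpen (Ioo (-r) r) := isOpen_Ioo
  have hJc : IsPreconnected (Ioo (-r) r) := isPreconnected_Ioo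
  have hJ0 : (0 : ℝ) ∈ Ioo (-r) r := ⟨by linarith, hr⟩
  -- the local solutions follow `γ` along the real axis
  have claim0 : ∀ t ∈ Icc (-R) R, ∀ u : ℝ, |u| < r → f t u = γ (t + u) := by
    intro t ht u hu
    have s1 : Sol Ω Z 1 (Ioo (-r) r) (fun u : ℝ => f t (0 + u * 1)) :=
      Sol.of_complex (hf t ht).2 0 1 (fun u hu => by
        simpa using hball u 0 (abs_lt.2 hu) (by simpa using hr))
    have s2 : Sol Ω Z 1 (Ioo (-r) r) (fun u : ℝ => γ (u + t)) :=
      (hΓ q hq).shift t (fun _ _ => mem_univ _)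
    have := Sol.unique hΩ hZ hJo hJc s1 s2 hJ0 (by simp [(hf t ht).1]) (abs_lt.1 hu)
    simpa [add_comm] using this
  have claim1 : ∀ t ∈ Icc (-R) R, ∀ t' ∈ Icc (-R) R, |t' - t| < r → ∀ s : ℝ, |s| < r →
      f t' (s * Complex.I) = f t (((t' - t : ℝ) : ℂ) + s * Complex.I) := by
    intro t ht t' ht' htt s hs
    have s1 : Sol Ω Z Complex.I (Ioo (-r) r) (fun s : ℝ => f t' (0 + s * Complex.I)) :=
      Sol.of_complex (hf t' ht').2 0 Complex.I (fun u hu => by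
        simpa using hball 0 u (by simpa using hr) (abs_lt.2 hu))
    have s2 : Sol Ω Z Complex.I (Ioo (-r) r)
        (fun s : ℝ => f t (((t' - t : ℝ) : ℂ) + s * Complex.I)) :=
      Sol.of_complex (hf t ht).2 _ Complex.I (fun u hu => hball _ u htt (abs_lt.2 hu))
    have := Sol.unique hΩ hZ hJo hJc s1 s2 hJ0 (by
      have h0 := claim0 t ht _ htt
      simp only [Complex.ofReal_zero, zero_mul, add_zero]
      rw [h0, (hf t' ht').1]; congr 1; ring) (abs_lt.1 hs)
    simpa using this
  -- the glued solution on a thin rectangle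
  let F : ℂ → E := fun T => f T.re (T.im * Complex.I)
  let W : Set ℂ := {T | T.re ∈ Ioo (-R) R ∧ T.im ∈ Ioo (-r) r}
  have claim2 : ∀ T ∈ W, F T ∈ Ω ∧ HasDerivAt F (Z (F T)) T := by
    rintro T ⟨hT1, hT2⟩
    have hT1' := Ioo_subset_Icc_self hT1
    have hmem : (T.im : ℂ) * Complex.I ∈ ball (0 : ℂ) r₁ := by
      simpa using hball 0 T.im (by simpa using hr) (abs_lt.2 hT2)
    obtain ⟨h1, h2⟩ := (hf T.re hT1').2 _ hmem
    refine ⟨h1, ?_⟩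
    have hev : F =ᶠ[𝓝 T] fun T' => f T.re (T' - (T.re : ℂ)) := by
      have e1 : ∀ᶠ T' : ℂ in 𝓝 T, T'.re ∈ Ioo (-R) R :=
        Complex.continuous_re.continuousAt.eventually_mem (isOpen_Ioo.mem_nhds hT1)
      have e2 : ∀ᶠ T' : ℂ in 𝓝 T, T'.im ∈ Ioo (-r) r :=
        Complex.continuous_im.continuousAt.eventually_mem (isOpen_Ioo.mem_nhds hT2)
      have e3 : ∀ᶠ T' : ℂ in 𝓝 T, T'.re ∈ ball T.re r :=
        Complex.continuous_re.continuousAt.eventually_mem (ball_mem_nhds _ hr)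
      filter_upwards [e1, e2, e3] with T' h1 h2 h3
      have := claim1 T.re hT1' T'.re (Ioo_subset_Icc_self h1) h3 T'.im (abs_lt.2 h2)
      change f T'.re (T'.im * Complex.I) = _
      rw [this]
      congr 1
      apply Complex.ext <;> simp
    have hT : T - (T.re : ℂ) = T.im * Complex.I := by apply Complex.ext <;> simp
    have h3 : HasDerivAt (fun T' => f T.re (T' - (T.re : ℂ))) (Z (F T)) T := by
      apply HasDerivAt.comp_sub_const
      rw [hT]; exact h2
    exact h3.congr_of_eventuallyEq hev
  have hR0' : (0 : ℝ) ∈ Icc (-R) R := ⟨by linarith, hR0.le⟩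
  have hR0'' : (0 : ℝ) ∈ Ioo (-R) R := ⟨by linarith, hR0⟩
  -- along the imaginary axis it is `χ`
  have claim3 : ∀ s ∈ Ioo (-r) r, F (s * Complex.I) = χ (s + T₀.im) := by
    intro s hs
    have s1 : Sol Ω Z Complex.I (Ioo (-r) r) (fun s : ℝ => F (0 + s * Complex.I)) :=
      Sol.of_complex claim2 0 Complex.I (fun u hu => ⟨by simpa using hR0, by simpa using hu⟩)
    have s2 : Sol Ω Z Complex.I (Ioo (-r) r) (fun s : ℝ => χ (s + T₀.im)) :=
      hχ.shift _ (fun u hu => hIr (by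
        rw [mem_ball, Real.dist_eq, add_sub_cancel_right]
        exact (abs_lt.2 hu).trans_le hrr₂))
    have := Sol.unique hΩ hZ hJo hJc s1 s2 hJ0 (by
      have h0 := (hf 0 hR0').1
      simpa [F, h0, hγdef] using hΓ0 q hq) hs
    simpa using this
  have claim4 : ∀ s ∈ Ioo (-r) r, ∀ t ∈ Ioo (-R) R,
      F ((t : ℂ) + s * Complex.I) = Γ (χ (s + T₀.im)) t := by
    intro s hs t ht
    have hχs : χ (s + T₀.im) ∈ Ω := by
      rw [← claim3 s hs]
      exact (claim2 _ ⟨by simpa using hR0, by simpa using hs⟩).1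
    have s1 : Sol Ω Z 1 (Ioo (-R) R) (fun t : ℝ => F (s * Complex.I + t * 1)) :=
      Sol.of_complex claim2 _ 1 (fun u hu => ⟨by simpa using hu, by simpa using hs⟩)
    have s2 : Sol Ω Z 1 (Ioo (-R) R) (Γ (χ (s + T₀.im))) := (hΓ _ hχs).mono (subset_univ _)
    have := Sol.unique hΩ hZ isOpen_Ioo isPreconnected_Ioo s1 s2 hR0'' (by
      simp [claim3 s hs, hΓ0 _ hχs]) ht
    simpa [add_comm] using this
  have hT₀R : T₀.re ∈ Ioo (-R) R := abs_lt.1 (by rw [hR]; linarith)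
  have hev : (fun T : ℂ => Γ (χ T.im) T.re) =ᶠ[𝓝 T₀]
      fun T => F (T - T₀.im * Complex.I) := by
    have e1 : ∀ᶠ T' : ℂ in 𝓝 T₀, T'.re ∈ Ioo (-R) R :=
      Complex.continuous_re.continuousAt.eventually_mem (isOpen_Ioo.mem_nhds hT₀R)
    have e2 : ∀ᶠ T' : ℂ in 𝓝 T₀, T'.im ∈ ball T₀.im r :=
      Complex.continuous_im.continuousAt.eventually_mem (ball_mem_nhds _ hr)
    filter_upwards [e1, e2] with T h1 h2
    have := claim4 (T.im - T₀.im) (abs_lt.1 h2) T.re h1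
    rw [sub_add_cancel] at this
    rw [← this]
    congr 1
    apply Complex.ext <;> simp
  have hsub : T₀ - T₀.im * Complex.I = T₀.re := by apply Complex.ext <;> simp
  have hmemW : T₀ - T₀.im * Complex.I ∈ W := by
    rw [hsub]; exact ⟨by simpa using hT₀R, by simpa using hr⟩
  have h5 := (claim2 _ hmemW).2
  have hval : γ T₀.re = F (T₀ - T₀.im * Complex.I) := hev.eq_of_nhds
  rw [← hval] at h5
  exact (HasDerivAt.comp_sub_const _ _ h5).congr_of_eventuallyEq hev

end RealCompleteAux

open RealCompleteAux in
/-- **Corollary C, item (ii).**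
If the real flow of a holomorphic vector field `Z` on an open subset `Ω` of a
finite-dimensional complex normed space is complete — every point lies on an integral
curve `γ : ℝ → Ω` of `Z` defined for all real times — then `Z` is semicomplete on `Ω`. -/
theorem real_complete_implies_semicomplete
    {E : Type*} [NormedAddCommGroup E] [NormedSpace ℂ E] [FiniteDimensional ℂ E]
    (Ω : Set E) (hΩ : IsOpen Ω) (Z : E → E)
    (hZ : DifferentiableOn ℂ Z Ω)
    (hreal : ∀ p ∈ Ω, ∃ γ : ℝ → E, (∀ t : ℝ, γ t ∈ Ω) ∧ γ 0 = p ∧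
      ∀ t : ℝ, HasDerivAt γ (Z (γ t)) t) :
    Semicomplete Ω Z := by
  classical
  have : CompleteSpace E := FiniteDimensional.complete ℂ E
  intro p hp
  have hflow : ∀ q : E, ∃ γ : ℝ → E, q ∈ Ω → (Sol Ω Z 1 univ γ ∧ γ 0 = q) := by
    intro q
    by_cases hq : q ∈ Ω
    · obtain ⟨γ, h1, h2, h3⟩ := hreal q hq
      exact ⟨γ, fun _ => ⟨fun t _ => ⟨h1 t, by simpa using h3 t⟩, h2⟩⟩
    · exact ⟨0, fun h => absurd h hq⟩
  choose Γ hΓ' using hflow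
  have hΓ : ∀ q ∈ Ω, Sol Ω Z 1 univ (Γ q) := fun q hq => (hΓ' q hq).1
  have hΓ0 : ∀ q ∈ Ω, Γ q 0 = q := fun q hq => (hΓ' q hq).2
  let A : Set ℝ → (ℝ → E) → Prop := fun I χ => IsOpen I ∧ IsPreconnected I ∧ (0 : ℝ) ∈ I ∧
    χ 0 = p ∧ Sol Ω Z Complex.I I χ
  let J : Set ℝ := {s | ∃ I χ, A I χ ∧ s ∈ I}
  have hsel : ∀ s : ℝ, ∃ I : Set ℝ, ∃ χ : ℝ → E, s ∈ J → A I χ ∧ s ∈ I := by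
    intro s
    by_cases hs : s ∈ J
    · obtain ⟨I, χ, h⟩ := hs
      exact ⟨I, χ, fun _ => h⟩
    · exact ⟨∅, 0, fun h => absurd h hs⟩
  choose I χ' hIχ using hsel
  let χ : ℝ → E := fun s => χ' s s
  have hχeq : ∀ I₀ χ₀, A I₀ χ₀ → EqOn χ χ₀ I₀ := by
    intro I₀ χ₀ h s hs
    obtain ⟨⟨a1, a2, a3, a4, a5⟩, hs'⟩ := hIχ s ⟨I₀, χ₀, h, hs⟩
    obtain ⟨b1, b2, b3, b4, b5⟩ := h
    exact Sol.unique hΩ hZ (a1.inter b1)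
      (a2.ordConnected.inter b2.ordConnected).isPreconnected
      (a5.mono inter_subset_left) (b5.mono inter_subset_right) ⟨a3, b3⟩ (a4.trans b4.symm)
      ⟨hs', hs⟩
  have hsubJ : ∀ I₀ χ₀, A I₀ χ₀ → I₀ ⊆ J := fun I₀ χ₀ h s hs => ⟨I₀, χ₀, h, hs⟩
  have hJo : IsOpen J := by
    rw [isOpen_iff_mem_nhds]
    rintro s ⟨I₀, χ₀, h, hs⟩
    exact mem_of_superset (h.1.mem_nhds hs) (hsubJ I₀ χ₀ h)
  have hJc : IsPreconnected J := by
    refine isPreconnected_of_forall 0 ?_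
    rintro s ⟨I₀, χ₀, h, hs⟩
    exact ⟨I₀, hsubJ I₀ χ₀ h, h.2.2.1, hs, h.2.1⟩
  have hχ : Sol Ω Z Complex.I J χ := by
    rintro s ⟨I₀, χ₀, h, hs⟩
    exact h.2.2.2.2.congr h.1 (hχeq I₀ χ₀ h) s hs
  -- nonemptiness
  obtain ⟨I₁, χ₁, hA₁⟩ : ∃ I₁ χ₁, A I₁ χ₁ := by
    obtain ⟨r, hr, h⟩ := exists_uniform hΩ hZ (isCompact_singleton (x := p))
      (singleton_subset_iff.2 hp)
    obtain ⟨f, hf0, hf⟩ := h p rfl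
    refine ⟨Ioo (-r) r, fun s : ℝ => f (0 + s * Complex.I), isOpen_Ioo, isPreconnected_Ioo,
      ⟨by linarith, hr⟩, by simpa using hf0, Sol.of_complex hf 0 Complex.I fun t ht => ?_⟩
    simpa using abs_lt.2 ht
  have h0J : (0 : ℝ) ∈ J := hsubJ I₁ χ₁ hA₁ hA₁.2.2.1
  have hχ0 : χ 0 = p := (hχeq I₁ χ₁ hA₁ hA₁.2.2.1).trans hA₁.2.2.2.1
  have hstrip := strip hΩ hZ hΓ hΓ0 hJo hχ
  have hVo : IsOpen (Complex.im ⁻¹' J) := hJo.preimage Complex.continuous_im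
  refine ⟨Complex.im ⁻¹' J, fun T => Γ (χ T.im) T.re, hVo, ?_, h0J,
    fun T hT => (hstrip T hT).1, ?_, fun T hT => (hstrip T hT).2.hasDerivWithinAt, ?_⟩
  · refine ⟨⟨0, h0J⟩, Convex.isPreconnected ?_⟩
    exact (convex_iff_ordConnected.2 hJc.ordConnected).linear_preimage Complex.imLm
  · simp [hχ0, hΓ0 p hp]
  · intro K hKΩ hK T hT Tl hTl hlim
    obtain ⟨r, hr, hloc⟩ := exists_uniform hΩ hZ hK hKΩ
    have hTlJ : Tl.im ∉ J := fun h => by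
      rw [hVo.frontier_eq] at hTl
      exact hTl.2 h
    have him : Tendsto (fun i => (T i).im) atTop (nhds Tl.im) :=
      (Complex.continuous_im.tendsto Tl).comp hlim
    filter_upwards [him.eventually_mem (Metric.ball_mem_nhds _ hr)] with i hi hiK
    apply hTlJ
    set s₁ := (T i).im with hs₁
    set t₁ := (T i).re with ht₁
    have hs₁J : s₁ ∈ J := hT i
    have hq : χ s₁ ∈ Ω := (hχ s₁ hs₁J).1
    obtain ⟨f, hf0, hf⟩ := hloc _ hiK
    have hfI : Sol Ω Z Complex.I (Ioo (-r) r) (fun s : ℝ => f (0 + s * Complex.I)) :=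
      Sol.of_complex hf 0 Complex.I fun t ht => by simpa using abs_lt.2 ht
    have hst := strip hΩ hZ hΓ hΓ0 isOpen_Ioo hfI
    have hη := Sol.of_complex hst (-t₁ : ℂ) Complex.I (I := Ioo (-r) r)
      (fun t ht => by simpa using ht)
    have hη' := hη.shift (I := Ioo (s₁ - r) (s₁ + r)) (-s₁)
      (fun t ht => ⟨by linarith [ht.1], by linarith [ht.2]⟩)
    have hback : Γ (Γ (χ s₁) t₁) (-t₁) = χ s₁ := by
      have s1 : Sol Ω Z 1 univ (fun u => Γ (χ s₁) (u + t₁)) :=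
        (hΓ _ hq).shift t₁ (fun _ _ => mem_univ _)
      have s2 := hΓ _ (hKΩ hiK)
      have := Sol.unique hΩ hZ isOpen_univ isPreconnected_univ s1 s2 (mem_univ 0)
        (by simp [hΓ0 _ (hKΩ hiK)]) (mem_univ (-t₁))
      rw [← this]
      simp [hΓ0 _ hq]
    have hs₁mem : s₁ ∈ Ioo (s₁ - r) (s₁ + r) := ⟨by linarith, by linarith⟩
    obtain ⟨k, hk1, hk2⟩ := Sol.glue hΩ hZ hJo hJc isOpen_Ioo isPreconnected_Ioo hχ hη'
      hs₁J hs₁mem (by simp [hf0, hback])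
    refine hsubJ (J ∪ Ioo (s₁ - r) (s₁ + r)) k ⟨hJo.union isOpen_Ioo,
      hJc.union s₁ hs₁J hs₁mem isPreconnected_Ioo, Or.inl h0J, (hk1 h0J).trans hχ0, hk2⟩ ?_
    right
    rw [Metric.mem_ball, Real.dist_eq, abs_lt] at hi
    exact ⟨by linarith [hi.2], by linarith [hi.1]⟩
end
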